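/- For every i ∈ Σ_{n+1} and every • ∈ {A, D}, one has |GP(i)| ≥ |GP(C_•(i))| + n. Moreover, if ind_A(i) · ind_D(i) > 0, then the inequality is strict for at least one • ∈ {A, D}. -/

import Mathlib

open scoped Classical

noncomputable section

namespace StringPolytope

/-! ### Words, reduced words, two-moves -/

/-- the simple transposition `s_a = (a, a+1)` acting on `ℕ` (wires are `1, …, n+1`). -/
def sTrans (a : ℕ) : Equiv.Perm ℕ := Equiv.swap a (a + 1)

/-- product `s_{i₁} ⋯ s_{i_N}` of the simple transpositions of a word. -/
def wordProd (w : List ℕ) : Equiv.Perm ℕ := (w.map sTrans).prod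

/-- the longest element `w₀` of the symmetric group on `{1, …, n+1}`,
sending `k ↦ n + 2 - k` there and fixing everything else. -/
def longestPerm (n : ℕ) : Equiv.Perm ℕ :=
  Function.Involutive.toPerm
    (fun k => if 1 ≤ k ∧ k ≤ n + 1 then n + 2 - k else k)
    (by intro k; dsimp only; split_ifs <;> omega)

/-- `w ∈ Σ_{n+1}`: a reduced word of the longest element of `S_{n+1}`,
i.e. a word over `[n] = {1,…,n}` of length `N = n(n+1)/2` whose product is `w₀`. -/
def IsReduced (n : ℕ) (w : List ℕ) : Prop :=
  w.length = n * (n + 1) / 2 ∧ (∀ a ∈ w, 1 ≤ a ∧ a ≤ n) ∧ wordProd w = longestPerm n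

/-- a single 2-move: exchange two adjacent letters `(a, b)` with `|a - b| > 1`. -/
def TwoMoveStep (w w' : List ℕ) : Prop :=
  ∃ u v a b, (a + 1 < b ∨ b + 1 < a) ∧ w = u ++ a :: b :: v ∧ w' = u ++ b :: a :: v

/-- 2-move equivalence of words. -/
def TwoMoveEquiv : List ℕ → List ℕ → Prop := Relation.ReflTransGen TwoMoveStep

/-- `A_n = (1, 2, …, n)`. -/
def ascWord (n : ℕ) : List ℕ := (List.range n).map (· + 1)

/-- `D_n = (n, n-1, …, 1)`. -/
def descWord (n : ℕ) : List ℕ := (ascWord n).reverse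

/-! ### The wiring diagram -/

/-- the letter `i_j` of `w` (1-based index `j`); the node `t_j` lies in column `i_j`. -/
def letterAt (w : List ℕ) (j : ℕ) : ℕ := w.getD (j - 1) 0

/-- `1 ≤ j ≤ N`: `t_j` is an actual node of the diagram. -/
def ValidNode (w : List ℕ) (j : ℕ) : Prop := 1 ≤ j ∧ j ≤ w.length

/-- the column-to-wire assignment just above node `t_j`
(at the top of the diagram, wire `k` is in column `k`). -/
def stateAbove (w : List ℕ) (j : ℕ) : Equiv.Perm ℕ := wordProd (w.take (j - 1))

/-- the column-to-wire assignment just below node `t_j`. -/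
def stateBelow (w : List ℕ) (j : ℕ) : Equiv.Perm ℕ := wordProd (w.take j)

/-- one of the two wires crossing at node `t_j` (the one leaving upward-left). -/
def wireX (w : List ℕ) (j : ℕ) : ℕ := stateAbove w j (letterAt w j)

/-- the other wire crossing at node `t_j` (the one leaving upward-right). -/
def wireY (w : List ℕ) (j : ℕ) : ℕ := stateAbove w j (letterAt w j + 1)

/-- the node `t_j` lies on the wire `ℓ_r`. -/
def NodeOnWire (w : List ℕ) (j r : ℕ) : Prop := wireX w j = r ∨ wireY w j = r

/-- given one wire `r` at node `t_j`, the other wire crossing there. -/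
def otherWire (w : List ℕ) (j r : ℕ) : ℕ := if wireX w j = r then wireY w j else wireX w j

/-- the column of wire `ℓ_r` at the height of node `t_j`. -/
def wireCol (w : List ℕ) (j r : ℕ) : ℕ := (stateBelow w j).symm r

/-- node `t_j` lies strictly below the wire `ℓ_{n+1}`
(which runs from the bottom-left corner to the top-right corner). -/
def BelowWireLast (n : ℕ) (w : List ℕ) (j : ℕ) : Prop :=
  wireCol w j (n + 1) < letterAt w j

/-- node `t_j` lies strictly above the wire `ℓ_{n+1}`. -/
def AboveWireLast (n : ℕ) (w : List ℕ) (j : ℕ) : Prop :=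
  letterAt w j + 1 < wireCol w j (n + 1)

/-- node `t_j` lies strictly below the wire `ℓ_1`
(which runs from the bottom-right corner to the top-left corner). -/
def BelowWireOne (w : List ℕ) (j : ℕ) : Prop :=
  letterAt w j + 1 < wireCol w j 1

/-- node `t_j` lies strictly above the wire `ℓ_1`. -/
def AboveWireOne (w : List ℕ) (j : ℕ) : Prop :=
  wireCol w j 1 < letterAt w j

/-! ### Rigorous (Gleizer–Postnikov) paths

A path in `G(i, k)` is encoded by `k` together with the list of its switching
nodes, in order of travel.  Wires `ℓ_1, …, ℓ_k` are oriented upward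
(decreasing node index) and the remaining wires downward. -/

/-- the (1-based indices of the) nodes lying on wire `ℓ_r`, in order of increasing index. -/
def nodesOn (w : List ℕ) (r : ℕ) : List ℕ :=
  ((List.range w.length).map (· + 1)).filter (fun j => decide (NodeOnWire w j r))

/-- nodes on wire `ℓ_r` strictly between the nodes `t_a` and `t_b`. -/
def segList (w : List ℕ) (r a b : ℕ) : List ℕ :=
  (nodesOn w r).filter (fun j => decide (min a b < j ∧ j < max a b))

/-- nodes on wire `ℓ_r` strictly below the node `t_a`. -/
def tailList (w : List ℕ) (r a : ℕ) : List ℕ :=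
  (nodesOn w r).filter (fun j => decide (a < j))

/-- a forbidden fragment of `G(i, k)`: the path passes straight through node `t_j`
travelling along the wire `ℓ_r`, where the other wire `ℓ_b` crossing there has the same
orientation as `ℓ_r` and (`r < b` if both upward, `r > b` if both downward). -/
def Forbidden (w : List ℕ) (k j r : ℕ) : Prop :=
  (r ≤ k ∧ otherWire w j r ≤ k ∧ r < otherWire w j r) ∨
  (k < r ∧ k < otherWire w j r ∧ otherWire w j r < r)

/-- travelling in `G(i,k)`: currently on wire `ℓ_r` at node `t_a` (just switched there),
with future switching nodes `ms`; the travel is legal and ends at `L_{k+1}`. -/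
def TravelOK (w : List ℕ) (k : ℕ) : ℕ → ℕ → List ℕ → Prop
  | r, a, [] => r = k + 1 ∧ ∀ j ∈ tailList w r a, ¬ Forbidden w k j r
  | r, a, m :: ms =>
      ValidNode w m ∧ NodeOnWire w m r ∧
      (if r ≤ k then m < a else a < m) ∧
      (∀ j ∈ segList w r a m, ¬ Forbidden w k j r) ∧
      TravelOK w k (otherWire w m r) m ms

/-- all nodes visited after the switch at node `t_a` onto wire `ℓ_r`. -/
def visitTail (w : List ℕ) : ℕ → ℕ → List ℕ → List ℕ
  | r, a, [] => tailList w r a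
  | r, a, m :: ms => segList w r a m ++ m :: visitTail w (otherWire w m r) m ms

/-- the list of all nodes visited by the path (switching nodes and straight passes). -/
def visitList (w : List ℕ) (k : ℕ) : List ℕ → List ℕ
  | [] => []
  | m :: ms => tailList w k m ++ m :: visitTail w (otherWire w m k) m ms

/-- `(k, ms)` encodes a rigorous (Gleizer–Postnikov) path in `G(i, k)`:
it starts at `L_k` going up the wire `ℓ_k`, switches wires exactly at the nodes
listed in `ms`, respects the orientation, ends at `L_{k+1}`, contains no forbidden
fragment and passes through each node at most once. -/
def IsGPPath (n : ℕ) (w : List ℕ) (k : ℕ) (ms : List ℕ) : Prop :=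
  1 ≤ k ∧ k ≤ n ∧
  (match ms with
   | [] => False
   | m :: rest =>
       ValidNode w m ∧ NodeOnWire w m k ∧
       (∀ j ∈ tailList w k m, ¬ Forbidden w k j k) ∧
       TravelOK w k (otherWire w m k) m rest) ∧
  (visitList w k ms).Nodup

/-- the set `GP(i)` of all rigorous paths of `G(i)`. -/
def GP (n : ℕ) (w : List ℕ) : Set (ℕ × List ℕ) := {p | IsGPPath n w p.1 p.2}

/-- `|GP(i)|`, the number of rigorous paths. -/
def numGP (n : ℕ) (w : List ℕ) : ℕ := (GP n w).ncard

/-- the successive switches of a path: `(node, from-wire, to-wire)`. -/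
def pathSwitches (w : List ℕ) : ℕ → List ℕ → List (ℕ × ℕ × ℕ)
  | _, [] => []
  | r, m :: ms => (m, r, otherWire w m r) :: pathSwitches w (otherWire w m r) ms

/-- the wire-expression of a path: the successive wires travelled. -/
def wireSeq (w : List ℕ) : ℕ → List ℕ → List ℕ
  | r, [] => [r]
  | r, m :: ms => r :: wireSeq w (otherWire w m r) ms

/-- the peaks of a path: switching nodes where the path switches from an
upward wire to a downward wire. -/
def peaks (w : List ℕ) (k : ℕ) (ms : List ℕ) : List ℕ :=
  ((pathSwitches w k ms).filter (fun e => decide (e.2.1 ≤ k ∧ k < e.2.2))).map (·.1)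

/-! ### String cone, `λ`-cone, string polytope -/

/-- `N = n(n+1)/2`, the number of nodes. -/
abbrev Dim (n : ℕ) : ℕ := n * (n + 1) / 2

/-- the coefficient `a_j` of `t_j` in the string inequality of the path `(k, ms)`:
`+1` if the path switches at `t_j` from `ℓ_r` to `ℓ_s` with `r < s`,
`-1` if it switches with `r > s`, and `0` otherwise. -/
def coeff (w : List ℕ) (k : ℕ) (ms : List ℕ) (j : ℕ) : ℝ :=
  ((pathSwitches w k ms).map (fun e =>
    if e.1 = j then (if e.2.1 < e.2.2 then (1 : ℝ) else -1) else 0)).sum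

/-- the (primitive inward normal) coefficient vector of the string inequality of a path. -/
def normalVec (n : ℕ) (w : List ℕ) (p : ℕ × List ℕ) : Fin (Dim n) → ℝ :=
  fun j => coeff w p.1 p.2 ((j : ℕ) + 1)

/-- the left-hand side `∑ a_j t_j` of the string inequality of the path `p`. -/
def stringIneq (n : ℕ) (w : List ℕ) (p : ℕ × List ℕ) (t : Fin (Dim n) → ℝ) : ℝ :=
  ∑ j : Fin (Dim n), normalVec n w p j * t j

/-- the string cone `C_i ⊆ ℝ^N`. -/
def stringCone (n : ℕ) (w : List ℕ) : Set (Fin (Dim n) → ℝ) :=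
  {t | ∀ p ∈ GP n w, 0 ≤ stringIneq n w p t}

/-- the polyhedron cut out by all string inequalities except the one of `p₀`. -/
def stringConeExcept (n : ℕ) (w : List ℕ) (p₀ : ℕ × List ℕ) : Set (Fin (Dim n) → ℝ) :=
  {t | ∀ p ∈ GP n w, p ≠ p₀ → 0 ≤ stringIneq n w p t}

/-- the coefficient `a_k` in the `λ`-inequality of node `t_j`:
`1` if `t_k` is one column left or right of `t_j`, `-2` if in the same column. -/
def lamCoeff (w : List ℕ) (j k : ℕ) : ℝ :=
  if letterAt w k = letterAt w j then -2
  else if letterAt w k = letterAt w j + 1 ∨ letterAt w k + 1 = letterAt w j then 1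
  else 0

/-- the `λ`-inequality of node `t_{j+1}`:
`t_j ≤ λ_{i_j} + ∑_{k > j} a_k t_k`. -/
def LamIneq (n : ℕ) (w : List ℕ) (lam : ℕ → ℤ) (j : Fin (Dim n)) (t : Fin (Dim n) → ℝ) : Prop :=
  t j ≤ (lam (letterAt w ((j : ℕ) + 1)) : ℝ) +
    ∑ k : Fin (Dim n),
      (if (j : ℕ) < (k : ℕ) then lamCoeff w ((j : ℕ) + 1) ((k : ℕ) + 1) else 0) * t k

/-- the `λ`-cone `C_i^λ ⊆ ℝ^N`. -/
def lamCone (n : ℕ) (w : List ℕ) (lam : ℕ → ℤ) : Set (Fin (Dim n) → ℝ) :=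
  {t | ∀ j, LamIneq n w lam j t}

/-- the polyhedron cut out by all `λ`-inequalities except the one of `j₀`. -/
def lamConeExcept (n : ℕ) (w : List ℕ) (lam : ℕ → ℤ) (j₀ : Fin (Dim n)) :
    Set (Fin (Dim n) → ℝ) :=
  {t | ∀ j, j ≠ j₀ → LamIneq n w lam j t}

/-- the string polytope `Δ_i(λ) = C_i ∩ C_i^λ`. -/
def stringPolytope (n : ℕ) (w : List ℕ) (lam : ℕ → ℤ) : Set (Fin (Dim n) → ℝ) :=
  stringCone n w ∩ lamCone n w lam

/-- `λ = λ_1 ϖ_1 + ⋯ + λ_n ϖ_n` is a dominant integral weight: all `λ_j ≥ 0`. -/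
def Dominant (n : ℕ) (lam : ℕ → ℤ) : Prop := ∀ j, 1 ≤ j → j ≤ n → 0 ≤ lam j

/-- `λ` is a regular dominant integral weight: all `λ_j > 0`. -/
def RegularDominant (n : ℕ) (lam : ℕ → ℤ) : Prop := ∀ j, 1 ≤ j → j ≤ n → 0 < lam j

/-! ### Unimodular equivalence, Gelfand–Cetlin polytope, facets -/

/-- `P` and `Q` are unimodularly equivalent: `Q = M(P) + v` with `M ∈ GL(m, ℤ)`, `v ∈ ℤ^m`. -/
def UnimodEquiv {m : ℕ} (P Q : Set (Fin m → ℝ)) : Prop :=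
  ∃ (M : Matrix (Fin m) (Fin m) ℤ) (v : Fin m → ℤ), IsUnit M.det ∧
    Q = (fun x i => (∑ j, (M i j : ℝ) * x j) + (v i : ℝ)) '' P

/-- the entry `x_{k,j}` (`1 ≤ j ≤ k ≤ n+1`) of a Gelfand–Cetlin pattern, where the
top row is `x_{n+1,j} = λ_j + ⋯ + λ_n` and `x_{n+1,n+1} = 0`; the pair `(k, j)` is
encoded as the coordinate `k(k-1)/2 + (j-1)` of `ℝ^N`. -/
def gcX (n : ℕ) (lam : ℕ → ℤ) (x : Fin (Dim n) → ℝ) (k j : ℕ) : ℝ :=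
  if k = n + 1 then (if j ≤ n then ∑ t ∈ Finset.Icc j n, (lam t : ℝ) else 0)
  else if h : k * (k - 1) / 2 + (j - 1) < Dim n then x ⟨k * (k - 1) / 2 + (j - 1), h⟩ else 0

/-- the Gelfand–Cetlin polytope `GC(λ) ⊆ ℝ^N`. -/
def GCPolytope (n : ℕ) (lam : ℕ → ℤ) : Set (Fin (Dim n) → ℝ) :=
  {x | ∀ k j, 1 ≤ k → k ≤ n → 1 ≤ j → j ≤ k →
      gcX n lam x k j ≤ gcX n lam x (k + 1) j ∧
      gcX n lam x (k + 1) (j + 1) ≤ gcX n lam x k j}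

/-- a face of a convex set: a convex extreme subset. -/
def IsFaceSet {m : ℕ} (S F : Set (Fin m → ℝ)) : Prop := IsExtreme ℝ S F ∧ Convex ℝ F

/-- a facet: a maximal proper face. -/
def IsFacet {m : ℕ} (S F : Set (Fin m → ℝ)) : Prop :=
  IsFaceSet S F ∧ F ≠ S ∧ ∀ G, IsFaceSet S G → G ≠ S → F ⊆ G → F = G

/-- the number of facets. -/
def numFacets {m : ℕ} (S : Set (Fin m → ℝ)) : ℕ := {F | IsFacet S F}.ncard

/-- combinatorial equivalence: an inclusion-preserving bijection between face lattices. -/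
def CombEquiv {m : ℕ} (S T : Set (Fin m → ℝ)) : Prop :=
  ∃ e : {F // IsFaceSet S F} ≃ {F // IsFaceSet T F},
    ∀ F G : {F // IsFaceSet S F}, F.1 ⊆ G.1 ↔ (e F).1 ⊆ (e G).1

/-! ### Indices, contractions and extensions -/

/-- the `D`-index `ind_D(i) = |i_D^+|` for a decomposition `i ∼ i_D^- D_n i_D^+`
(independent of the decomposition). -/
def indD (n : ℕ) (w : List ℕ) : ℕ :=
  sInf {s | ∃ u v : List ℕ, v.length = s ∧ TwoMoveEquiv w (u ++ descWord n ++ v)}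

/-- the `A`-index `ind_A(i) = |i_A^+|` for a decomposition `i ∼ i_A^- A_n i_A^+`. -/
def indA (n : ℕ) (w : List ℕ) : ℕ :=
  sInf {s | ∃ u v : List ℕ, v.length = s ∧ TwoMoveEquiv w (u ++ ascWord n ++ v)}

/-- `w'` is a `D`-contraction `C_D(w) = i_D^- (i_D^+ - 1)` of `w ∈ Σ_{n+1}`. -/
def IsContractionD (n : ℕ) (w w' : List ℕ) : Prop :=
  ∃ u v : List ℕ, TwoMoveEquiv w (u ++ descWord n ++ v) ∧ w' = u ++ v.map (· - 1)

/-- `w'` is an `A`-contraction `C_A(w) = (i_A^- - 1) i_A^+` of `w ∈ Σ_{n+1}`. -/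
def IsContractionA (n : ℕ) (w w' : List ℕ) : Prop :=
  ∃ u v : List ℕ, TwoMoveEquiv w (u ++ ascWord n ++ v) ∧ w' = u.map (· - 1) ++ v

/-- the `D`-extension `E_D(s) : Σ_{n+1} → Σ_{n+2}`,
`i = i^-(s) i^+(s) ↦ i^-(s) D_{n+1} (i^+(s) + 1)` where `|i^+(s)| = s`. -/
def extD (n : ℕ) (s : ℕ) (w : List ℕ) : List ℕ :=
  w.take (w.length - s) ++ descWord (n + 1) ++ (w.drop (w.length - s)).map (· + 1)

/-- the `A`-extension `E_A(s) : Σ_{n+1} → Σ_{n+2}`,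
`i = i^-(s) i^+(s) ↦ (i^-(s) + 1) A_{n+1} i^+(s)`. -/
def extA (n : ℕ) (s : ℕ) (w : List ℕ) : List ℕ :=
  (w.take (w.length - s)).map (· + 1) ++ ascWord (n + 1) ++ w.drop (w.length - s)

/-- there exists `(σ_1, …, σ_n) ∈ {A, D}^n` (here `true = D`, `false = A`) such that
`ind_{σ_k}(C_{σ_{k+1}} ∘ ⋯ ∘ C_{σ_n}(i)) = 0` for all `k = n, …, 1`. -/
def SimplicialWord (n : ℕ) (w : List ℕ) : Prop :=
  ∃ (σ : ℕ → Bool) (c : ℕ → List ℕ), c n = w ∧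
    ∀ k, 1 ≤ k → k ≤ n →
      (if σ k then IsContractionD k (c k) (c (k - 1)) ∧ indD k (c k) = 0
       else IsContractionA k (c k) (c (k - 1)) ∧ indA k (c k) = 0)


/-- the `D`-coindex `coind_D(i) = |i_D^-|`. -/
def coindD (n : ℕ) (w : List ℕ) : ℕ :=
  sInf {s | ∃ u v : List ℕ, u.length = s ∧ TwoMoveEquiv w (u ++ descWord n ++ v)}

/-- the `A`-coindex `coind_A(i) = |i_A^-|`. -/
def coindA (n : ℕ) (w : List ℕ) : ℕ :=
  sInf {s | ∃ u v : List ℕ, u.length = s ∧ TwoMoveEquiv w (u ++ ascWord n ++ v)}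

/-- the `a`-th (0-based) coordinate of a point of `ℝ^N`. -/
def entry (n : ℕ) (t : Fin (Dim n) → ℝ) (a : ℕ) : ℝ :=
  if h : a < Dim n then t ⟨a, h⟩ else 0

/-- the product of cones
`t_1 ≥ 0`, `t_2 ≥ t_3 ≥ 0`, …, `t_{N-n+1} ≥ ⋯ ≥ t_N ≥ 0` (in `ℝ^N`, 1-based:
for `k = 1, …, n` the chain `t_{k(k-1)/2+1} ≥ ⋯ ≥ t_{k(k-1)/2+k} ≥ 0`). -/
def chainCone (n : ℕ) : Set (Fin (Dim n) → ℝ) :=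
  {t | ∀ k j, 1 ≤ k → k ≤ n → 1 ≤ j → j ≤ k →
    (if j = k then 0 else entry n t (k * (k - 1) / 2 + j)) ≤
      entry n t (k * (k - 1) / 2 + (j - 1))}

/-!
Record the wiring diagram of a reduced word by the heights `T r s` at which `ℓ_r` and `ℓ_s` cross,
`T r 0` being the lower endpoint of `ℓ_r`.  A rigorous path is determined by the sequence of wires
it follows, and each condition on it involves three consecutive wires only; hence the number of
paths depends only on the order of the crossings along each wire.  This order is not affected by
2-moves, the D-contraction just deletes `ℓ_{n+1}`, and reflecting the diagram exchanges A and D.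

The paths avoiding `ℓ_{n+1}` are those of the D-contraction.  For every `j ≤ n` there is moreover
a path which enters `ℓ_{n+1}` from `ℓ_j` and uses downward wires from then on: these are `n` more.
If there is no further path, then along `ℓ_{n+1}` no crossing with an `ℓ_x`, `x > k + 1`, lies
below that with `ℓ_k` and above that with `ℓ_{k+1}`, and the wire `ℓ_j` gives a path as above for
a single `k` only.  If the D-index is positive, some `ℓ_{m+1}` meets `ℓ_{n+1}` above `ℓ_m`, and the
first such `m` must be `1`.  When the same holds for the reflected diagram, some path
`k, n + 1, 1, k + 1` is rigorous; it returns to an upward wire after `ℓ_{n+1}`, a contradiction.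
-/

/-! ### Sequences and chains -/

theorem exists_and_not_succ {P : ℕ → Prop} {a b : ℕ} (hab : a ≤ b) (ha : P a) (hb : ¬ P b) :
    ∃ m, a ≤ m ∧ m < b ∧ P m ∧ ¬ P (m + 1) := by
  by_contra! h
  exact hb (Nat.le_induction (m := a) (P := fun m _ => m ≤ b → P m) (fun _ => ha)
    (fun m hm ih hmb => h m hm hmb (ih (Nat.le_of_succ_le hmb))) b hab le_rfl)

/-- Every three consecutive entries of the list satisfy `P`. -/
def TripleChain (P : ℕ → ℕ → ℕ → Prop) : List ℕ → Prop
  | a :: r :: b :: l => P a r b ∧ TripleChain P (r :: b :: l)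
  | _ => True

namespace TripleChain

variable {P Q : ℕ → ℕ → ℕ → Prop}

theorem mono (hPQ : ∀ a r b, P a r b → Q a r b) : ∀ l, TripleChain P l → TripleChain Q l
  | [], _ => trivial
  | [_], _ => trivial
  | [_, _], _ => trivial
  | _ :: _ :: _ :: _, h => ⟨hPQ _ _ _ h.1, mono hPQ _ h.2⟩

theorem append {x y : ℕ} {l' : List ℕ} (h' : TripleChain P (x :: y :: l')) :
    ∀ l, TripleChain P (l ++ [x, y]) → TripleChain P (l ++ x :: y :: l')
  | [], _ => h'
  | [_], h => ⟨h.1, h'⟩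
  | [_, _], h => ⟨h.1, h.2.1, h'⟩
  | _ :: b :: c :: l, h => ⟨h.1, append h' (b :: c :: l) h.2⟩

theorem reverse_map (f : ℕ → ℕ) (hPQ : ∀ a r b, P a r b → Q (f b) (f r) (f a)) :
    ∀ l, TripleChain P l → TripleChain Q (l.map f).reverse
  | [], _ => trivial
  | [_], _ => trivial
  | [_, _], _ => trivial
  | a :: r :: b :: l, h => by
    have tail := reverse_map f hPQ (r :: b :: l) h.2
    have glued := append (x := f b) (y := f r) (l' := [f a]) ⟨hPQ _ _ _ h.1, trivial⟩
      (l.map f).reverse (by simpa using tail)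
    simpa using glued

theorem forall_mem_interior {R : ℕ → Prop} (hPR : ∀ a r b, P a r b → R r) (y : ℕ) :
    ∀ x c, TripleChain P (x :: (c ++ [y])) → ∀ r ∈ c, R r
  | _, [], _ => by simp
  | _, [r], h => by simpa using hPR _ _ _ h.1
  | _, r :: s :: c, h => List.forall_mem_cons.2
      ⟨hPR _ _ _ h.1, forall_mem_interior hPR y r (s :: c) h.2⟩

end TripleChain

/-! ### Crossing heights and wire paths -/

/-- `r` is the index of one of the wires `ℓ_1, …, ℓ_{n+1}`. -/
abbrev IsWire (n r : ℕ) : Prop := 1 ≤ r ∧ r ≤ n + 1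

/-- `T r s` is the height, counted downwards, of the crossing of the wires `ℓ_r` and `ℓ_s` in
some wiring diagram on `n + 1` wires.  The value `T r 0` encodes the lower endpoint `L_r`. -/
structure CrossingHeights (n : ℕ) (T : ℕ → ℕ → ℕ) : Prop where
  symm {r s : ℕ} : IsWire n r → IsWire n s → T r s = T s r
  lt_bottom {r s : ℕ} : IsWire n r → IsWire n s → r ≠ s → T r s < T r 0
  between {a b c : ℕ} : 1 ≤ a → a < b → b < c → c ≤ n + 1 →
    (T a b < T a c ∧ T a c < T b c) ∨ (T b c < T a c ∧ T a c < T a b)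

/-- On the wire `ℓ_r` of `G(i, k)`, the crossing with `ℓ_x` comes before the one with `ℓ_y`
in the direction of travel. -/
def Precedes (T : ℕ → ℕ → ℕ) (k r x y : ℕ) : Prop :=
  if r ≤ k then T r y < T r x else T r x < T r y

/-- Passing straight along `ℓ_r` through its crossing with `ℓ_x` is a forbidden fragment
of `G(i, k)`. -/
def ForbiddenPass (k r x : ℕ) : Prop := (r ≤ k ∧ x ≤ k ∧ r < x) ∨ (k < r ∧ k < x ∧ x < r)

/-- In `G(i, k)` one may enter `ℓ_r` at its crossing with `ℓ_a` and leave it at its crossing with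
`ℓ_b`.  The indices `a = 0` and `b = 0` stand for starting and ending at the endpoint `L_r`. -/
structure LegalTurn (n : ℕ) (T : ℕ → ℕ → ℕ) (k a r b : ℕ) : Prop where
  isWire : IsWire n r
  source_le : a ≤ n + 1
  target_le : b ≤ n + 1
  source_ne : a ≠ r
  target_ne : b ≠ r
  precedes : Precedes T k r a b
  not_forbidden {x : ℕ} : IsWire n x → x ≠ r → Precedes T k r a x → Precedes T k r x b →
    ¬ ForbiddenPass k r x

/-- `c` is the sequence of wires of a rigorous path of `G(i, k)`, for a diagram with crossing
heights `T`. -/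
structure IsWirePath (n : ℕ) (T : ℕ → ℕ → ℕ) (k : ℕ) (c : List ℕ) : Prop where
  one_le : 1 ≤ k
  le : k ≤ n
  head? : c.head? = some k
  getLast? : c.getLast? = some (k + 1)
  legal : TripleChain (LegalTurn n T k) (0 :: (c ++ [0]))

/-- The set of pairs `(k, c)` with `c` the wire sequence of a rigorous path of `G(i, k)`. -/
def wirePaths (n : ℕ) (T : ℕ → ℕ → ℕ) : Set (ℕ × List ℕ) := {p | IsWirePath n T p.1 p.2}

section Basic

variable {n k r x y : ℕ} {T : ℕ → ℕ → ℕ}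

theorem precedes_of_le (h : r ≤ k) : Precedes T k r x y ↔ T r y < T r x := by
  rw [Precedes, if_pos h]

theorem precedes_of_lt (h : k < r) : Precedes T k r x y ↔ T r x < T r y := by
  rw [Precedes, if_neg h.not_ge]

theorem CrossingHeights.triple (hT : CrossingHeights n T) {a b c : ℕ} (ha : 1 ≤ a) (hab : a < b)
    (hbc : b < c) (hc : c ≤ n + 1) :
    T b a = T a b ∧ T c a = T a c ∧ T c b = T b c ∧
      ((T a b < T a c ∧ T a c < T b c) ∨ (T b c < T a c ∧ T a c < T a b)) :=
  ⟨hT.symm (by omega) (by omega), hT.symm (by omega) (by omega),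
    hT.symm (by omega) (by omega), hT.between ha hab hbc hc⟩

theorem CrossingHeights.last_ne (hT : CrossingHeights n T) (hx : 1 ≤ x) (hxn : x ≤ n)
    (hy : 1 ≤ y) (hyn : y ≤ n) (hxy : x ≠ y) : T (n + 1) x ≠ T (n + 1) y := by
  rcases Nat.lt_or_gt_of_ne hxy with h | h
  · have := hT.triple (c := n + 1) hx h (by omega) le_rfl
    omega
  · have := hT.triple (c := n + 1) hy h (by omega) le_rfl
    omega

theorem IsWirePath.isWire {c : List ℕ} (h : IsWirePath n T k c) : ∀ r ∈ c, IsWire n r :=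
  TripleChain.forall_mem_interior (R := IsWire n) (fun _ _ _ => LegalTurn.isWire) 0 0 c h.legal

theorem LegalTurn.succ {a b : ℕ} (hk : k ≤ n) (h : LegalTurn n T k a r b) :
    LegalTurn (n + 1) T k a r b where
  isWire := ⟨h.isWire.1, h.isWire.2.trans n.succ.le_succ⟩
  source_le := h.source_le.trans n.succ.le_succ
  target_le := h.target_le.trans n.succ.le_succ
  source_ne := h.source_ne
  target_ne := h.target_ne
  precedes := h.precedes
  not_forbidden {x} hx hxr hax hxb hf := by
    have hr := h.isWire
    by_cases hxn : x ≤ n + 1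
    · exact h.not_forbidden ⟨hx.1, hxn⟩ hxr hax hxb hf
    · simp only [ForbiddenPass] at hf
      omega

theorem wirePaths_subset_succ (n : ℕ) (T : ℕ → ℕ → ℕ) : wirePaths n T ⊆ wirePaths (n + 1) T :=
  fun _ h => ⟨h.one_le, h.le.trans n.le_succ, h.head?, h.getLast?,
    TripleChain.mono (fun _ _ _ => LegalTurn.succ h.le) _ h.legal⟩

end Basic

/-! ### Diagrams with the same order of crossings, and reflected diagrams -/

/-- On every wire the crossings come in the same order for `T` as for `T'`. -/
def SameOrder (n : ℕ) (T T' : ℕ → ℕ → ℕ) : Prop :=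
  ∀ r x y, IsWire n r → x ≤ n + 1 → y ≤ n + 1 → x ≠ r → y ≠ r → (T r x < T r y ↔ T' r x < T' r y)

namespace SameOrder

variable {n : ℕ} {T T' T'' : ℕ → ℕ → ℕ}

theorem refl (n : ℕ) (T : ℕ → ℕ → ℕ) : SameOrder n T T := fun _ _ _ _ _ _ _ _ => Iff.rfl

theorem symm (h : SameOrder n T T') : SameOrder n T' T :=
  fun r x y hr hx hy hxr hyr => (h r x y hr hx hy hxr hyr).symm

theorem trans (h : SameOrder n T T') (h' : SameOrder n T' T'') : SameOrder n T T'' :=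
  fun r x y hr hx hy hxr hyr => (h r x y hr hx hy hxr hyr).trans (h' r x y hr hx hy hxr hyr)

theorem precedes_iff (h : SameOrder n T T') {k r x y : ℕ} (hr : IsWire n r) (hx : x ≤ n + 1)
    (hy : y ≤ n + 1) (hxr : x ≠ r) (hyr : y ≠ r) :
    Precedes T k r x y ↔ Precedes T' k r x y := by
  rw [Precedes, Precedes, h r x y hr hx hy hxr hyr, h r y x hr hy hx hyr hxr]

theorem legalTurn (h : SameOrder n T T') {k a r b : ℕ} (ht : LegalTurn n T k a r b) :
    LegalTurn n T' k a r b where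
  isWire := ht.isWire
  source_le := ht.source_le
  target_le := ht.target_le
  source_ne := ht.source_ne
  target_ne := ht.target_ne
  precedes := (h.precedes_iff ht.isWire ht.source_le ht.target_le ht.source_ne ht.target_ne).1
    ht.precedes
  not_forbidden hx hxr hax hxb := ht.not_forbidden hx hxr
    ((h.precedes_iff ht.isWire ht.source_le hx.2 ht.source_ne hxr).2 hax)
    ((h.precedes_iff ht.isWire hx.2 ht.target_le hxr ht.target_ne).2 hxb)

theorem wirePaths_subset (h : SameOrder n T T') : wirePaths n T ⊆ wirePaths n T' :=
  fun _ hp => ⟨hp.one_le, hp.le, hp.head?, hp.getLast?,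
    TripleChain.mono (fun _ _ _ => h.legalTurn) _ hp.legal⟩

theorem wirePaths_eq (h : SameOrder n T T') : wirePaths n T = wirePaths n T' :=
  h.wirePaths_subset.antisymm h.symm.wirePaths_subset

end SameOrder

section Reflection

variable {n k r x y : ℕ} {T : ℕ → ℕ → ℕ}

theorem longestPerm_apply (n r : ℕ) :
    longestPerm n r = if 1 ≤ r ∧ r ≤ n + 1 then n + 2 - r else r := rfl

theorem longestPerm_of_isWire (h : IsWire n r) : longestPerm n r = n + 2 - r := if_pos h

theorem longestPerm_zero (n : ℕ) : longestPerm n 0 = 0 := by simp [longestPerm_apply]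

theorem longestPerm_longestPerm (n r : ℕ) : longestPerm n (longestPerm n r) = r := by
  simp only [longestPerm_apply]
  split_ifs <;> omega

theorem isWire_longestPerm (h : IsWire n r) : IsWire n (longestPerm n r) := by
  rw [longestPerm_of_isWire h]
  omega

theorem longestPerm_le (h : r ≤ n + 1) : longestPerm n r ≤ n + 1 := by
  rw [longestPerm_apply]
  split_ifs <;> omega

/-- The crossing heights of the diagram reflected in a vertical line, which swaps the wires
`ℓ_r` and `ℓ_{n+2-r}`. -/
def reflectHeights (n : ℕ) (T : ℕ → ℕ → ℕ) : ℕ → ℕ → ℕ :=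
  fun r s => T (longestPerm n r) (longestPerm n s)

theorem reflectHeights_reflectHeights (n : ℕ) (T : ℕ → ℕ → ℕ) :
    reflectHeights n (reflectHeights n T) = T := by
  funext r s
  simp only [reflectHeights, longestPerm_longestPerm]

theorem reflectHeights_of_isWire (hx : IsWire n x) (hy : IsWire n y) :
    reflectHeights n T x y = T (n + 2 - x) (n + 2 - y) := by
  rw [reflectHeights, longestPerm_of_isWire hx, longestPerm_of_isWire hy]

theorem CrossingHeights.reflect (hT : CrossingHeights n T) :
    CrossingHeights n (reflectHeights n T) where
  symm hr hs := hT.symm (isWire_longestPerm hr) (isWire_longestPerm hs)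
  lt_bottom {r s} hr hs hrs := by
    simp only [reflectHeights, longestPerm_zero]
    exact hT.lt_bottom (isWire_longestPerm hr) (isWire_longestPerm hs)
      ((longestPerm n).injective.ne hrs)
  between {a b c} ha hab hbc hc := by
    rw [reflectHeights_of_isWire (by omega) (by omega),
      reflectHeights_of_isWire (by omega) (by omega),
      reflectHeights_of_isWire (by omega) (by omega)]
    have := hT.triple (a := n + 2 - c) (b := n + 2 - b) (c := n + 2 - a)
      (by omega) (by omega) (by omega) (by omega)
    omega

theorem precedes_reflect (hk : k ≤ n) (hr : IsWire n r) :
    Precedes (reflectHeights n T) (n + 1 - k) (longestPerm n r) (longestPerm n y)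
      (longestPerm n x) ↔ Precedes T k r x y := by
  have hr' := longestPerm_of_isWire hr
  rcases le_or_gt r k with h | h
  · rw [precedes_of_le h, precedes_of_lt (by omega)]
    simp only [reflectHeights, longestPerm_longestPerm]
  · rw [precedes_of_lt h, precedes_of_le (by omega)]
    simp only [reflectHeights, longestPerm_longestPerm]

theorem LegalTurn.reflect {a b : ℕ} (hk : k ≤ n) (h : LegalTurn n T k a r b) :
    LegalTurn n (reflectHeights n T) (n + 1 - k) (longestPerm n b) (longestPerm n r)
      (longestPerm n a) where
  isWire := isWire_longestPerm h.isWire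
  source_le := longestPerm_le h.target_le
  target_le := longestPerm_le h.source_le
  source_ne := (longestPerm n).injective.ne h.target_ne
  target_ne := (longestPerm n).injective.ne h.source_ne
  precedes := (precedes_reflect hk h.isWire).2 h.precedes
  not_forbidden {x} hx hxr hbx hxa hf := by
    obtain ⟨z, rfl⟩ := (longestPerm n).surjective x
    have hz : IsWire n z := longestPerm_longestPerm n z ▸ isWire_longestPerm hx
    refine h.not_forbidden hz (fun e => hxr (e ▸ rfl)) ((precedes_reflect hk h.isWire).1 hxa)
      ((precedes_reflect hk h.isWire).1 hbx) ?_
    have hr := h.isWire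
    rw [longestPerm_of_isWire hr, longestPerm_of_isWire hz] at hf
    simp only [ForbiddenPass] at hf ⊢
    omega

theorem IsWirePath.reflect {c : List ℕ} (h : IsWirePath n T k c) :
    IsWirePath n (reflectHeights n T) (n + 1 - k) (c.map (longestPerm n)).reverse := by
  have hk := h.one_le
  have hkn := h.le
  refine ⟨by omega, by omega, ?_, ?_, ?_⟩
  · rw [List.head?_reverse, List.getLast?_map, h.getLast?, Option.map_some,
      longestPerm_of_isWire (by omega), show n + 2 - (k + 1) = n + 1 - k by omega]
  · rw [List.getLast?_reverse, List.head?_map, h.head?, Option.map_some,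
      longestPerm_of_isWire (by omega), show n + 2 - k = n + 1 - k + 1 by omega]
  · have := TripleChain.reverse_map (longestPerm n) (fun _ _ _ => LegalTurn.reflect hkn) _ h.legal
    simpa [longestPerm_zero] using this

theorem ncard_wirePaths_reflectHeights (n : ℕ) (T : ℕ → ℕ → ℕ) :
    (wirePaths n (reflectHeights n T)).ncard = (wirePaths n T).ncard := by
  symm
  refine Set.ncard_congr (fun p _ => (n + 1 - p.1, (p.2.map (longestPerm n)).reverse))
    (fun _ hp => IsWirePath.reflect hp) ?_ ?_
  · rintro ⟨k, c⟩ ⟨k', c'⟩ hp hp' e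
    have hk : k ≤ n := hp.le
    have hk' : k' ≤ n := hp'.le
    simp only [Prod.mk.injEq, List.reverse_inj] at e
    exact Prod.ext (by omega : k = k') (List.map_injective_iff.2 (longestPerm n).injective e.2)
  · rintro ⟨k, c⟩ hp
    have hk : k ≤ n := hp.le
    refine ⟨(n + 1 - k, (c.map (longestPerm n)).reverse), ?_, ?_⟩
    · have := IsWirePath.reflect hp
      rwa [reflectHeights_reflectHeights] at this
    · simp only [List.map_reverse, List.reverse_reverse, List.map_map, Prod.mk.injEq]
      refine ⟨by omega, ?_⟩
      rw [show ⇑(longestPerm n) ∘ longestPerm n = id from funext (longestPerm_longestPerm n),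
        List.map_id]

end Reflection

/-! ### Acyclicity of the oriented diagram -/

/-- `F` increases along every wire of `G(i, k)`, in the direction of travel. -/
structure IsPotential (n : ℕ) (T : ℕ → ℕ → ℕ) (k : ℕ) (F : ℕ → ℕ → ℕ) : Prop where
  symm {r s : ℕ} : IsWire n r → IsWire n s → F r s = F s r
  strictMono {r x y : ℕ} : IsWire n r → x ≤ n + 1 → y ≤ n + 1 → Precedes T k r x y → F r x < F r y

section Potential

variable {n k r x y : ℕ} {T F : ℕ → ℕ → ℕ}

theorem exists_le_bound (F : ℕ → ℕ → ℕ) (m : ℕ) : ∃ B, ∀ r ≤ m, ∀ x ≤ m, F r x ≤ B :=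
  ⟨(Finset.range (m + 1) ×ˢ Finset.range (m + 1)).sup fun p => F p.1 p.2, fun r hr x hx =>
    Finset.le_sup (f := fun p : ℕ × ℕ => F p.1 p.2) (b := (r, x))
      (by simp only [Finset.mem_product, Finset.mem_range]; omega)⟩

theorem precedes_succ_self : Precedes T (k + 1) (k + 1) x y ↔ Precedes T k (k + 1) y x := by
  rw [precedes_of_le le_rfl, precedes_of_lt k.lt_succ_self]

theorem precedes_succ_of_ne (h : r ≠ k + 1) : Precedes T (k + 1) r x y ↔ Precedes T k r x y := by
  rcases le_or_gt r k with hr | hr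
  · rw [precedes_of_le (by omega), precedes_of_le hr]
  · rw [precedes_of_lt (by omega), precedes_of_lt hr]

theorem Precedes.trans {z : ℕ} (hxy : Precedes T k r x y) (hyz : Precedes T k r y z) :
    Precedes T k r x z := by
  unfold Precedes at *
  split_ifs at * <;> omega

theorem CrossingHeights.precedes_comm (hT : CrossingHeights n T) (hk : k ≤ n) (hx : IsWire n x)
    (hy : IsWire n y) (hxk : x ≠ k + 1) (hyk : y ≠ k + 1) :
    Precedes T k x y (k + 1) ↔ Precedes T k y x (k + 1) := by
  wlog hxy : x < y generalizing x y
  · rcases (not_lt.1 hxy).eq_or_lt with rfl | h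
    · rfl
    · exact (this hy hx hyk hxk h).symm
  rcases le_or_gt y k with hyk' | hyk'
  · have := hT.triple (c := k + 1) hx.1 hxy (by omega) (by omega)
    rw [precedes_of_le (by omega), precedes_of_le hyk']
    omega
  rcases le_or_gt x k with hxk' | hxk'
  · have := hT.triple (b := k + 1) hx.1 (by omega) (by omega) hy.2
    rw [precedes_of_le hxk', precedes_of_lt hyk']
    omega
  · have := hT.triple (a := k + 1) (by omega) (by omega) hxy hy.2
    rw [precedes_of_lt hxk', precedes_of_lt hyk']
    omega

/-- Turning `ℓ_{k+1}` around reverses the potential along this wire, and moves the crossings behind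
it (for the old orientation) above all the others. -/
def reorientPotential (T : ℕ → ℕ → ℕ) (k B : ℕ) (F : ℕ → ℕ → ℕ) (r x : ℕ) : ℕ :=
  if r = k + 1 ∨ x = k + 1 then 2 * B - F r x
  else if Precedes T k r x (k + 1) then F r x else F r x + (2 * B + 1)

theorem IsPotential.reorient {B : ℕ} (hT : CrossingHeights n T) (hk : k ≤ n)
    (hF : IsPotential n T k F) (hB : ∀ r ≤ n + 1, ∀ x ≤ n + 1, F r x ≤ B) :
    IsPotential n T (k + 1) (reorientPotential T k B F) where
  symm {r s} hr hs := by
    by_cases hrs : r = k + 1 ∨ s = k + 1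
    · rw [reorientPotential, reorientPotential, if_pos hrs, if_pos hrs.symm, hF.symm hr hs]
    · rw [not_or] at hrs
      simp only [reorientPotential, or_self, hrs, if_false,
        hT.precedes_comm hk hr hs hrs.1 hrs.2, hF.symm hr hs]
  strictMono {r x y} hr hx hy hxy := by
    have hxB := hB r hr.2 x hx
    have hyB := hB r hr.2 y hy
    rcases eq_or_ne r (k + 1) with rfl | hrk
    · have := hF.strictMono hr hy hx (precedes_succ_self.1 hxy)
      simp only [reorientPotential, true_or, if_true]
      omega
    rw [precedes_succ_of_ne hrk] at hxy
    have hlt := hF.strictMono hr hx hy hxy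
    simp only [reorientPotential, hrk, false_or]
    rcases eq_or_ne x (k + 1) with rfl | hxk
    · have hyk : y ≠ k + 1 := fun h => by simp [h] at hlt
      have hnot : ¬ Precedes T k r y (k + 1) := fun h =>
        (hF.strictMono hr hy hx h).not_gt hlt
      rw [if_pos rfl, if_neg hyk, if_neg hnot]
      omega
    rcases eq_or_ne y (k + 1) with rfl | hyk
    · rw [if_neg hxk, if_pos hxy, if_pos rfl]
      omega
    rw [if_neg hxk, if_neg hyk]
    by_cases hyP : Precedes T k r y (k + 1)
    · rwa [if_pos hyP, if_pos (hxy.trans hyP)]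
    · rw [if_neg hyP]
      split_ifs <;> omega

theorem CrossingHeights.exists_potential (hT : CrossingHeights n T) :
    ∀ k ≤ n + 1, ∃ F, IsPotential n T k F
  | 0, _ => ⟨T, hT.symm, fun hr _ _ h => (precedes_of_lt hr.1).1 h⟩
  | k + 1, hk => by
    obtain ⟨F, hF⟩ := hT.exists_potential k (by omega)
    obtain ⟨B, hB⟩ := exists_le_bound F (n + 1)
    exact ⟨_, hF.reorient hT (by omega) hB⟩

theorem IsPotential.add_length_le {B : ℕ} (hF : IsPotential n T k F)
    (hB : ∀ r ≤ n + 1, ∀ x ≤ n + 1, F r x ≤ B) :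
    ∀ (c : List ℕ) (a r : ℕ), a ≤ n + 1 → IsWire n r →
      TripleChain (LegalTurn n T k) (a :: r :: (c ++ [0])) → F r a + c.length ≤ B
  | [], a, r, ha, hr, _ => hB r hr.2 a ha
  | s :: c, a, r, ha, hr, h => by
    have hs : IsWire n s :=
      TripleChain.forall_mem_interior (R := IsWire n) (fun _ _ _ => LegalTurn.isWire) 0 r (s :: c)
        h.2 s (by simp)
    have hlt := hF.strictMono hr ha hs.2 h.1.precedes
    have hle := hF.add_length_le hB c r s hr.2 hs h.2
    rw [hF.symm hr hs] at hlt
    simp only [List.length_cons]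
    omega

theorem CrossingHeights.finite_wirePaths (hT : CrossingHeights n T) : (wirePaths n T).Finite := by
  suffices h : ∀ k ≤ n, {c | IsWirePath n T k c}.Finite by
    refine ((Set.finite_Iic n).biUnion fun k hk => (h k hk).image (Prod.mk k)).subset ?_
    exact fun p hp => Set.mem_biUnion (show p.1 ∈ Set.Iic n from hp.le) ⟨p.2, hp, rfl⟩
  intro k hk
  obtain ⟨F, hF⟩ := hT.exists_potential k (by omega)
  obtain ⟨B, hB⟩ := exists_le_bound F (n + 1)
  refine ((List.finite_length_le (Fin (n + 2)) (B + 1)).image (List.map Fin.val)).subset ?_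
  intro c (hc : IsWirePath n T k c)
  have hlt : ∀ r ∈ c, r < n + 2 := fun r hr => Nat.lt_succ_of_le (hc.isWire r hr).2
  have hlen : c.length ≤ B + 1 := by
    rcases c with _ | ⟨r, c⟩
    · exact Nat.zero_le _
    · have := hF.add_length_le hB c 0 r (Nat.zero_le _) (hc.isWire r (by simp)) hc.legal
      simp only [List.length_cons]
      omega
  lift c to List (Fin (n + 2)) using hlt
  exact ⟨c, by simpa using hlen, rfl⟩

end Potential

/-! ### Greedy paths -/

section Greedy

variable {n k r s p j x : ℕ} {T : ℕ → ℕ → ℕ}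

theorem legalTurn_end (hT : CrossingHeights n T) (hk : k ≤ n) (hp : IsWire n p) (hpk : p ≠ k + 1) :
    LegalTurn n T k p (k + 1) 0 where
  isWire := by omega
  source_le := hp.2
  target_le := Nat.zero_le _
  source_ne := hpk
  target_ne := by omega
  precedes := (precedes_of_lt k.lt_succ_self).2 (hT.lt_bottom (by omega) hp hpk.symm)
  not_forbidden _ _ _ _ := by
    unfold ForbiddenPass
    omega

theorem legalTurn_start (hT : CrossingHeights n T) (hk1 : 1 ≤ k) (hk : k ≤ n) (hs : IsWire n s)
    (hsk : s ≠ k) : LegalTurn n T k 0 k s where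
  isWire := by omega
  source_le := Nat.zero_le _
  target_le := hs.2
  source_ne := by omega
  target_ne := hsk
  precedes := (precedes_of_le le_rfl).2 (hT.lt_bottom (by omega) hs hsk.symm)
  not_forbidden _ _ _ _ := by
    unfold ForbiddenPass
    omega

/-- Leave `ℓ_r` at the first crossing which may not be passed straight. -/
theorem exists_next_descent (hT : CrossingHeights n T) (hkr : k + 1 < r) (hr : r ≤ n + 1)
    (hp : p ≤ n + 1) (hpr : p ≠ r) (h : T r p < T r (k + 1)) :
    ∃ x, k < x ∧ x < r ∧ LegalTurn n T k p r x ∧ (x = k + 1 ∨ T x r < T x (k + 1)) := by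
  obtain ⟨x, hx, hmin⟩ := Finset.exists_min_image
    ((Finset.Ioo k r).filter fun x => T r p < T r x) (T r)
    ⟨k + 1, by simp only [Finset.mem_filter, Finset.mem_Ioo]; omega⟩
  simp only [Finset.mem_filter, Finset.mem_Ioo] at hx hmin
  refine ⟨x, hx.1.1, hx.1.2, ⟨by omega, hp, by omega, hpr, by omega, ?_, ?_⟩, ?_⟩
  · exact (precedes_of_lt (by omega)).2 hx.2
  · intro y _ _ hpy hyx hf
    rw [precedes_of_lt (by omega)] at hpy hyx
    have := hmin y ⟨by unfold ForbiddenPass at hf; omega, hpy⟩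
    omega
  · refine or_iff_not_imp_left.2 fun hxk => ?_
    have := hmin (k + 1) ⟨by omega, h⟩
    have := hT.triple (a := k + 1) (b := x) (by omega) (by omega) hx.1.2 hr
    omega

theorem exists_descent (hT : CrossingHeights n T) (hk : k ≤ n) (r p : ℕ) (hkr : k < r)
    (hr : r ≤ n + 1) (hp : IsWire n p) (hpr : p ≠ r) (h : r = k + 1 ∨ T r p < T r (k + 1)) :
    ∃ l : List ℕ, (∀ x ∈ l, k < x ∧ x < r) ∧ (r :: l).getLast? = some (k + 1) ∧
      TripleChain (LegalTurn n T k) (p :: r :: (l ++ [0])) := by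
  induction r using Nat.strong_induction_on generalizing p with
  | _ r ih =>
  by_cases hrk : r = k + 1
  · exact ⟨[], by simp, by simp [hrk], hrk ▸ legalTurn_end hT hk hp (hrk ▸ hpr), trivial⟩
  · obtain ⟨x, hkx, hxr, hturn, hx⟩ := exists_next_descent hT (by omega) hr hp.2 hpr
      (h.resolve_left hrk)
    obtain ⟨l, hl, hlast, hchain⟩ := ih x hxr r hkx (by omega) (by omega) (by omega) hx
    refine ⟨x :: l, List.forall_mem_cons.2 ⟨⟨hkx, hxr⟩, fun y hy => ?_⟩, ?_, hturn, hchain⟩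
    · exact ⟨(hl y hy).1, (hl y hy).2.trans hxr⟩
    · rwa [List.getLast?_cons_cons]

theorem exists_ascent (hT : CrossingHeights n T) (hk1 : 1 ≤ k) (hk : k ≤ n) (hj : 1 ≤ j)
    (hjk : j ≤ k) (hs : IsWire n s) (hsj : s ≠ j) (h : j = k ∨ T j s < T j k) :
    ∃ l : List ℕ, (∀ x ∈ l, j < x ∧ x ≤ k) ∧ (l ++ [j]).head? = some k ∧
      TripleChain (LegalTurn n T k) (0 :: (l ++ [j, s])) := by
  have hk' : n + 1 - (n + 1 - k) = k := by omega
  obtain ⟨l, hl, hlast, hchain⟩ := exists_descent (k := n + 1 - k) hT.reflect (by omega)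
    (longestPerm n j) (longestPerm n s) (by rw [longestPerm_of_isWire (by omega)]; omega)
    (longestPerm_le (by omega)) (isWire_longestPerm hs) ((longestPerm n).injective.ne hsj)
    (by
      simp only [reflectHeights, longestPerm_longestPerm]
      rw [longestPerm_of_isWire (r := j) (by omega), longestPerm_of_isWire (by omega),
        show n + 2 - (n + 1 - k + 1) = k by omega]
      omega)
  refine ⟨(l.map (longestPerm n)).reverse, fun x hx => ?_, ?_, ?_⟩
  · rw [List.mem_reverse, List.mem_map] at hx
    obtain ⟨y, hy, rfl⟩ := hx
    have := hl y hy
    rw [longestPerm_of_isWire (by omega)] at this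
    rw [longestPerm_of_isWire (by omega)]
    omega
  · have : (l.map (longestPerm n)).reverse ++ [j] =
        ((longestPerm n j :: l).map (longestPerm n)).reverse := by
      simp only [List.map_cons, longestPerm_longestPerm, List.reverse_cons]
    rw [this, List.head?_reverse, List.getLast?_map, hlast, Option.map_some,
      longestPerm_of_isWire (by omega), show n + 2 - (n + 1 - k + 1) = k by omega]
  · have := TripleChain.reverse_map (longestPerm n)
      (fun _ _ _ => LegalTurn.reflect (Nat.sub_le_of_le_add (by omega))) _ hchain
    simpa [reflectHeights_reflectHeights, longestPerm_longestPerm, longestPerm_zero, hk']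
      using this

/-- Enter `ℓ_x` at the last possible crossing, so that nothing forbidden is passed afterwards. -/
theorem exists_previous_descent (hT : CrossingHeights n T) (hk1 : 1 ≤ k) (hkx : k < x)
    (hx : x ≤ n + 1) (hs : s ≤ n + 1) (hsx : s ≠ x) (h : T x k < T x s) :
    ∃ y, k ≤ y ∧ y < x ∧ LegalTurn n T k y x s ∧ (y = k ∨ T y k < T y x) := by
  obtain ⟨y, hy, hmax⟩ := Finset.exists_max_image
    ((Finset.Ico k x).filter fun y => T x y < T x s) (T x)
    ⟨k, by simp only [Finset.mem_filter, Finset.mem_Ico]; omega⟩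
  simp only [Finset.mem_filter, Finset.mem_Ico] at hy hmax
  refine ⟨y, hy.1.1, hy.1.2, ⟨by omega, by omega, hs, by omega, hsx, ?_, ?_⟩, ?_⟩
  · exact (precedes_of_lt hkx).2 hy.2
  · intro z _ _ hyz hzs hf
    rw [precedes_of_lt hkx] at hyz hzs
    have := hmax z ⟨by unfold ForbiddenPass at hf; omega, hzs⟩
    omega
  · refine or_iff_not_imp_left.2 fun hyk => ?_
    have := hmax k ⟨by omega, h⟩
    have := hT.triple (a := k) (b := y) hk1 (by omega) hy.1.2 hx
    omega

theorem exists_descent_to (hT : CrossingHeights n T) (hk1 : 1 ≤ k) (x s : ℕ) (hkx : k < x)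
    (hx : x ≤ n + 1) (hs : s ≤ n + 1) (hsx : s ≠ x) (h : T x k < T x s) :
    ∃ l : List ℕ, (∀ y ∈ l, 1 ≤ y ∧ y < x) ∧ (l ++ [x]).head? = some k ∧
      TripleChain (LegalTurn n T k) (0 :: (l ++ [x, s])) := by
  induction x using Nat.strong_induction_on generalizing s with
  | _ x ih =>
  obtain ⟨y, hky, hyx, hturn, hy⟩ := exists_previous_descent hT hk1 hkx hx hs hsx h
  by_cases hyk : y = k
  · subst hyk
    exact ⟨[y], by simp; omega, by simp,
      legalTurn_start hT hk1 (by omega) (by omega) (by omega), hturn, trivial⟩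
  · obtain ⟨l, hl, hhead, hchain⟩ := ih y hyx x (by omega) (by omega) hx (by omega)
      (hy.resolve_left hyk)
    refine ⟨l ++ [y], fun z hz => ?_, ?_, ?_⟩
    · rcases List.mem_append.1 hz with hz | hz
      · exact ⟨(hl z hz).1, (hl z hz).2.trans hyx⟩
      · rw [List.mem_singleton] at hz
        omega
    · rw [List.head?_append, hhead]
      rfl
    · simpa using TripleChain.append (x := y) (y := x) (l' := [s]) ⟨hturn, trivial⟩ (0 :: l) hchain

theorem mem_wirePaths_of_glue (hk1 : 1 ≤ k) (hk : k ≤ n) {U V : List ℕ} {x y : ℕ}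
    (hhead : (U ++ [x]).head? = some k) (hlast : (y :: V).getLast? = some (k + 1))
    (hU : TripleChain (LegalTurn n T k) (0 :: (U ++ [x, y])))
    (hV : TripleChain (LegalTurn n T k) (x :: y :: (V ++ [0]))) :
    (k, U ++ x :: y :: V) ∈ wirePaths n T := by
  have hsplit : U ++ x :: y :: V = (U ++ [x]) ++ y :: V := by simp
  refine ⟨hk1, hk, ?_, ?_, ?_⟩
  · simp only [hsplit]
    rw [List.head?_append, hhead]
    rfl
  · simp only [hsplit]
    rw [List.getLast?_append, hlast]
    rfl
  · simpa using TripleChain.append hV (0 :: U) hU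

/-- `ℓ_k` is an admissible starting wire for greedily climbing to `ℓ_j` and descending from
`ℓ_{n+1}`: on `ℓ_{n+1}`, the crossing with `ℓ_j` lies between those with `ℓ_k` and `ℓ_{k+1}`. -/
structure IsEntryLevel (n : ℕ) (T : ℕ → ℕ → ℕ) (j k : ℕ) : Prop where
  le : j ≤ k
  le_last : k ≤ n
  above : j = k ∨ T (n + 1) k < T (n + 1) j
  below : k = n ∨ T (n + 1) j < T (n + 1) (k + 1)

theorem exists_isEntryLevel (hT : CrossingHeights n T) (hj : 1 ≤ j) (hjs : j ≤ s) (hs : s ≤ n)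
    (h : j = s ∨ T (n + 1) s < T (n + 1) j) : ∃ k, s ≤ k ∧ IsEntryLevel n T j k := by
  obtain ⟨k, hsk, hkn, hk, hk'⟩ := exists_and_not_succ
    (P := fun m => m ≤ n ∧ (j = m ∨ T (n + 1) m < T (n + 1) j)) (a := s) (b := n + 1) (by omega)
    ⟨hs, h⟩ (by omega)
  refine ⟨k, hsk, by omega, by omega, hk.2, or_iff_not_imp_left.2 fun hkn' => ?_⟩
  have := hT.last_ne hj (y := k + 1) (by omega) (by omega) (by omega) (by omega)
  omega

theorem IsEntryLevel.exists_mem_wirePaths (hT : CrossingHeights n T) (hj : 1 ≤ j)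
    (h : IsEntryLevel n T j k) :
    ∃ U V : List ℕ, (∀ x ∈ U, x < n + 1) ∧ (∀ x ∈ V, k < x ∧ x < n + 1) ∧
      (k, U ++ j :: (n + 1) :: V) ∈ wirePaths n T := by
  obtain ⟨hjk, hk, habove, hbelow⟩ := h
  have hjk' : j = k ∨ T j (n + 1) < T j k := by
    refine or_iff_not_imp_left.2 fun hne => ?_
    have := hT.triple (b := k) (c := n + 1) hj (by omega) (by omega) le_rfl
    omega
  obtain ⟨U, hU, hhead, hUchain⟩ := exists_ascent (s := n + 1) hT (by omega) hk hj hjk (by omega)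
    (by omega) hjk'
  obtain ⟨V, hV, hlast, hVchain⟩ := exists_descent hT hk (n + 1) j (by omega) le_rfl (by omega)
    (by omega) (hbelow.imp_left fun h : k = n => h ▸ rfl)
  exact ⟨U, V, fun x hx => by have := hU x hx; omega, hV,
    mem_wirePaths_of_glue (by omega) hk hhead hlast hUchain hVchain⟩

theorem exists_mem_wirePaths_of_pattern (hT : CrossingHeights n T) (hk1 : 1 ≤ k) (hkx : k + 1 < x)
    (hx : x ≤ n) (habove : T (n + 1) k < T (n + 1) x) (hbelow : T (n + 1) x < T (n + 1) (k + 1)) :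
    ∃ U V : List ℕ, (k, U ++ x :: (n + 1) :: V) ∈ wirePaths n T := by
  have := hT.triple (b := x) (c := n + 1) hk1 (by omega) (by omega) le_rfl
  obtain ⟨U, -, hhead, hUchain⟩ := exists_descent_to hT hk1 x (n + 1) (by omega) (by omega) le_rfl
    (by omega) (by omega)
  obtain ⟨V, -, hlast, hVchain⟩ := exists_descent hT (by omega) (n + 1) x (by omega) le_rfl
    (by omega) (by omega) (Or.inr hbelow)
  exact ⟨U, V, mem_wirePaths_of_glue hk1 (by omega) hhead hlast hUchain hVchain⟩

theorem valley_mem_wirePaths (hT : CrossingHeights n T) (hk1 : 2 ≤ k) (hkn : k + 1 ≤ n)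
    (habove : T (n + 1) k < T (n + 1) 1) (hbelow : T (n + 1) 1 < T (n + 1) (k + 1))
    (hlast : ∀ x, k + 1 < x → x ≤ n → T (n + 1) k < T (n + 1) x →
      ¬ T (n + 1) x < T (n + 1) (k + 1))
    (hfirst : ∀ x, 2 ≤ x → x < k → T 1 (k + 1) < T 1 x → ¬ T 1 x < T 1 k) :
    (k, [k, n + 1, 1, k + 1]) ∈ wirePaths n T := by
  have hk := hT.triple (a := 1) (b := k) (c := n + 1) le_rfl (by omega) (by omega) le_rfl
  have hk' := hT.triple (a := 1) (b := k + 1) (c := n + 1) le_rfl (by omega) (by omega) le_rfl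
  have hturn : LegalTurn n T k k (n + 1) 1 := by
    refine ⟨by omega, by omega, by omega, by omega, by omega,
      (precedes_of_lt (by omega)).2 habove, fun {x} _ _ hkx hx1 hf => ?_⟩
    rw [precedes_of_lt (by omega)] at hkx hx1
    unfold ForbiddenPass at hf
    have : x ≠ k + 1 := by rintro rfl; omega
    exact hlast x (by omega) (by omega) hkx (by omega)
  have hturn' : LegalTurn n T k (n + 1) 1 (k + 1) := by
    refine ⟨by omega, by omega, by omega, by omega, by omega,
      (precedes_of_le (by omega)).2 (by omega), fun {x} _ _ hx1 hkx hf => ?_⟩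
    rw [precedes_of_le (by omega)] at hkx hx1
    unfold ForbiddenPass at hf
    have : x ≠ k := by rintro rfl; omega
    exact hfirst x (by omega) (by omega) hkx (by omega)
  exact ⟨by simp only; omega, by simp only; omega, rfl, rfl,
    legalTurn_start hT (by simp only; omega) (by simp only; omega) (by omega) (by simp only; omega),
    hturn, hturn', legalTurn_end hT (by simp only; omega) (by omega) (by simp only; omega), trivial⟩

end Greedy

/-! ### Counting the paths through the last wire -/

/-- The path `p` enters `ℓ_{n+1}` from the upward wire `ℓ_j`, and from then on uses downward
wires only. -/
def EntersLastFrom (n j : ℕ) (p : ℕ × List ℕ) : Prop :=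
  j ≤ p.1 ∧ p.1 ≤ n ∧ ∃ U V : List ℕ, (∀ x ∈ U, x < n + 1) ∧ (∀ x ∈ V, p.1 < x ∧ x < n + 1) ∧
    p.2 = U ++ j :: (n + 1) :: V

/-- There are at most `n` more paths than after removing the last wire. -/
def IsTight (n : ℕ) (T : ℕ → ℕ → ℕ) : Prop :=
  (wirePaths n T).ncard ≤ (wirePaths (n - 1) T).ncard + n

/-- Going down `ℓ_{n+1}`, the crossing with some `ℓ_{m+1}` comes before the one with `ℓ_m`. -/
def HasDescent (n : ℕ) (T : ℕ → ℕ → ℕ) : Prop :=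
  ∃ m, 1 ≤ m ∧ m < n ∧ T (n + 1) (m + 1) < T (n + 1) m

section Counting

variable {n j k : ℕ} {T : ℕ → ℕ → ℕ} {p q : ℕ × List ℕ}

theorem append_last_inj {j' : ℕ} {U V U' V' : List ℕ} (hU : ∀ x ∈ U, x < n + 1) (hj : j ≤ n)
    (hV : ∀ x ∈ V, x < n + 1) (h : U ++ j :: (n + 1) :: V = U' ++ j' :: (n + 1) :: V') :
    j = j' ∧ V = V' := by
  have hUj : n + 1 ∉ U ++ [j] := by
    intro hmem
    rcases List.mem_append.1 hmem with hmem | hmem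
    · exact (hU _ hmem).false
    · rw [List.mem_singleton] at hmem
      omega
  obtain ⟨heq, -, hVV'⟩ := (List.append_cons_inj_of_notMem hUj fun hmem => (hV _ hmem).false).1
    (show (U ++ [j]) ++ (n + 1) :: V = (U' ++ [j']) ++ (n + 1) :: V' by simpa using h)
  exact ⟨List.singleton_inj.1 (List.append_inj' heq rfl).2, hVV'⟩

theorem EntersLastFrom.unique {j' : ℕ} (h : EntersLastFrom n j p) (h' : EntersLastFrom n j' p) :
    j = j' := by
  obtain ⟨hj, hp, U, V, hU, hV, e⟩ := h
  obtain ⟨-, -, U', V', -, -, e'⟩ := h'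
  exact (append_last_inj hU (hj.trans hp) (fun x hx => (hV x hx).2) (e.symm.trans e')).1

theorem EntersLastFrom.last_mem (h : EntersLastFrom n j p) : n + 1 ∈ p.2 := by
  obtain ⟨-, -, U, V, -, -, e⟩ := h
  simp [e]

theorem last_notMem_of_mem_wirePaths_pred (hn : 1 ≤ n) (hp : p ∈ wirePaths (n - 1) T) :
    n + 1 ∉ p.2 := fun h => by
  have := IsWirePath.isWire hp _ h
  omega

theorem IsEntryLevel.exists_entersLastFrom (hT : CrossingHeights n T) (hj : 1 ≤ j)
    (h : IsEntryLevel n T j k) : ∃ p ∈ wirePaths n T, EntersLastFrom n j p ∧ p.1 = k := by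
  obtain ⟨U, V, hU, hV, hp⟩ := h.exists_mem_wirePaths hT hj
  exact ⟨_, hp, ⟨h.le, h.le_last, U, V, hU, hV, rfl⟩, rfl⟩

theorem exists_entersLastFrom (hT : CrossingHeights n T) :
    ∃ f : ℕ → ℕ × List ℕ, ∀ j ∈ Set.Icc 1 n, f j ∈ wirePaths n T ∧ EntersLastFrom n j (f j) := by
  have h : ∀ j ∈ Set.Icc 1 n, ∃ p, p ∈ wirePaths n T ∧ EntersLastFrom n j p := by
    rintro j ⟨hj, hjn⟩
    obtain ⟨k, -, hk⟩ := exists_isEntryLevel hT hj le_rfl hjn (Or.inl rfl)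
    obtain ⟨p, hp, hpj, -⟩ := hk.exists_entersLastFrom hT hj
    exact ⟨p, hp, hpj⟩
  choose! f hf using h
  exact ⟨f, hf⟩

theorem union_image_subset_wirePaths (hn : 1 ≤ n) {f : ℕ → ℕ × List ℕ}
    (hf : ∀ j ∈ Set.Icc 1 n, f j ∈ wirePaths n T) :
    wirePaths (n - 1) T ∪ f '' Set.Icc 1 n ⊆ wirePaths n T := by
  obtain ⟨m, rfl⟩ := Nat.exists_eq_add_of_le' hn
  exact Set.union_subset (wirePaths_subset_succ m T) (Set.image_subset_iff.2 hf)

theorem ncard_union_image (hT : CrossingHeights n T) (hn : 1 ≤ n) {f : ℕ → ℕ × List ℕ}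
    (hf : ∀ j ∈ Set.Icc 1 n, f j ∈ wirePaths n T ∧ EntersLastFrom n j (f j)) :
    (wirePaths (n - 1) T ∪ f '' Set.Icc 1 n).ncard = (wirePaths (n - 1) T).ncard + n := by
  have hsub := union_image_subset_wirePaths hn fun j hj => (hf j hj).1
  have hdisj : Disjoint (wirePaths (n - 1) T) (f '' Set.Icc 1 n) := by
    rw [Set.disjoint_left]
    rintro p hp ⟨j, hj, rfl⟩
    exact last_notMem_of_mem_wirePaths_pred hn hp (hf j hj).2.last_mem
  have hinj : Set.InjOn f (Set.Icc 1 n) := fun a ha b hb hab =>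
    (hf a ha).2.unique (hab ▸ (hf b hb).2)
  rw [Set.ncard_union_eq hdisj (hT.finite_wirePaths.subset (Set.subset_union_left.trans hsub))
    (Set.toFinite _), hinj.ncard_image, ← Finset.coe_Icc, Set.ncard_coe_finset, Nat.card_Icc,
    Nat.add_sub_cancel]

theorem ncard_wirePaths_pred_add_le (hT : CrossingHeights n T) (hn : 1 ≤ n) :
    (wirePaths (n - 1) T).ncard + n ≤ (wirePaths n T).ncard := by
  obtain ⟨f, hf⟩ := exists_entersLastFrom hT
  rw [← ncard_union_image hT hn hf]
  exact Set.ncard_le_ncard (union_image_subset_wirePaths hn fun j hj => (hf j hj).1)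
    hT.finite_wirePaths

end Counting

/-! ### Tight diagrams -/

namespace IsTight

variable {n j k x : ℕ} {T : ℕ → ℕ → ℕ} {p q : ℕ × List ℕ}

theorem union_image_eq (hT : CrossingHeights n T) (hn : 1 ≤ n) (h : IsTight n T)
    {f : ℕ → ℕ × List ℕ}
    (hf : ∀ j ∈ Set.Icc 1 n, f j ∈ wirePaths n T ∧ EntersLastFrom n j (f j)) :
    wirePaths (n - 1) T ∪ f '' Set.Icc 1 n = wirePaths n T :=
  Set.eq_of_subset_of_ncard_le (union_image_subset_wirePaths hn fun j hj => (hf j hj).1)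
    (h.trans (ncard_union_image hT hn hf).ge) hT.finite_wirePaths

theorem exists_entersLastFrom (hT : CrossingHeights n T) (hn : 1 ≤ n) (h : IsTight n T)
    (hp : p ∈ wirePaths n T) (hlast : n + 1 ∈ p.2) : ∃ j, EntersLastFrom n j p := by
  obtain ⟨f, hf⟩ := StringPolytope.exists_entersLastFrom hT
  rw [← h.union_image_eq hT hn hf] at hp
  rcases hp with hp | ⟨j, hj, rfl⟩
  · exact (last_notMem_of_mem_wirePaths_pred hn hp hlast).elim
  · exact ⟨j, (hf j hj).2⟩

theorem eq_of_entersLastFrom (hT : CrossingHeights n T) (hn : 1 ≤ n) (h : IsTight n T)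
    (hp : p ∈ wirePaths n T) (hq : q ∈ wirePaths n T) (hpj : EntersLastFrom n j p)
    (hqj : EntersLastFrom n j q) : p = q := by
  obtain ⟨f, hf⟩ := StringPolytope.exists_entersLastFrom hT
  have eq_f : ∀ p ∈ wirePaths n T, EntersLastFrom n j p → p = f j := by
    intro p hp hpj
    rw [← h.union_image_eq hT hn hf] at hp
    rcases hp with hp | ⟨i, hi, rfl⟩
    · exact (last_notMem_of_mem_wirePaths_pred hn hp hpj.last_mem).elim
    · rw [(hf i hi).2.unique hpj]
  rw [eq_f p hp hpj, eq_f q hq hqj]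

theorem not_pattern (hT : CrossingHeights n T) (hn : 1 ≤ n) (h : IsTight n T) (hk : 1 ≤ k)
    (hkx : k + 1 < x) (hx : x ≤ n) (habove : T (n + 1) k < T (n + 1) x) :
    ¬ T (n + 1) x < T (n + 1) (k + 1) := fun hbelow => by
  obtain ⟨U, V, hp⟩ := exists_mem_wirePaths_of_pattern hT hk hkx hx habove hbelow
  obtain ⟨j, hjk, hkn, U', V', hU', hV', e⟩ := h.exists_entersLastFrom hT hn hp (by simp)
  have := append_last_inj hU' (hjk.trans hkn) (fun x hx => (hV' x hx).2) e.symm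
  simp only at hjk
  omega

theorem isEntryLevel_unique (hT : CrossingHeights n T) (hn : 1 ≤ n) (h : IsTight n T) (hj : 1 ≤ j)
    {k' : ℕ} (hk : IsEntryLevel n T j k) (hk' : IsEntryLevel n T j k') : k = k' := by
  obtain ⟨p, hp, hpj, rfl⟩ := hk.exists_entersLastFrom hT hj
  obtain ⟨q, hq, hqj, rfl⟩ := hk'.exists_entersLastFrom hT hj
  rw [h.eq_of_entersLastFrom hT hn hp hq hpj hqj]

/-- The first descent `T (n + 1) (m + 1) < T (n + 1) m` cannot have `1 < m`: otherwise either
`m - 1, m + 1, m` is a forbidden pattern, or `ℓ_{m-1}` has a second entry level. -/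
theorem two_lt_one (hT : CrossingHeights n T) (hn : 1 ≤ n) (h : IsTight n T)
    (hdesc : HasDescent n T) :
    T (n + 1) 2 < T (n + 1) 1 := by
  by_contra hcon
  obtain ⟨m, hm, hmn, hlt⟩ := hdesc
  have h12 : T (n + 1) 1 < T (n + 1) 2 := by
    have := hT.last_ne (x := 1) (y := 2) le_rfl hn (by omega) (by omega) (by omega)
    omega
  obtain ⟨i, hi, him, hup, hdown⟩ := exists_and_not_succ
    (P := fun m => T (n + 1) m < T (n + 1) (m + 1)) hm h12 hlt.le.not_gt
  have hne := hT.last_ne (x := i + 1) (y := i + 1 + 1) (by omega) (by omega) (by omega) (by omega)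
    (by omega)
  have hne' := hT.last_ne (x := i) (y := i + 1 + 1) hi (by omega) (by omega) (by omega) (by omega)
  rcases hne'.lt_or_gt with hlt' | hgt
  · exact h.not_pattern hT hn hi (x := i + 1 + 1) (by omega) (by omega) hlt' (by omega)
  · obtain ⟨k, hk, hentry⟩ := exists_isEntryLevel hT hi (s := i + 1 + 1) (by omega) (by omega)
      (Or.inr hgt)
    have := h.isEntryLevel_unique hT hn hi ⟨le_rfl, by omega, Or.inl rfl, Or.inr hup⟩ hentry
    omega

theorem not_reflect (hT : CrossingHeights n T) (hn : 1 ≤ n) (h : IsTight n T)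
    (hdesc : HasDescent n T)
    (hdesc' : HasDescent n (reflectHeights n T)) :
    ¬ IsTight n (reflectHeights n T) := fun h' => by
  have hn2 : 2 ≤ n := by
    obtain ⟨m, hm, hmn, -⟩ := hdesc
    omega
  have reflect_last : ∀ y, IsWire n y → reflectHeights n T (n + 1) y = T 1 (n + 2 - y) :=
    fun y hy => by
      rw [reflectHeights_of_isWire (by omega) hy, show n + 2 - (n + 1) = 1 by omega]
  have h21 := h.two_lt_one hT hn hdesc
  have h21' := h'.two_lt_one hT.reflect hn hdesc'
  rw [reflect_last 2 (by omega), reflect_last 1 (by omega), show n + 2 - 2 = n by omega,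
    show n + 2 - 1 = n + 1 by omega] at h21'
  have := hT.triple (a := 1) (b := n) (c := n + 1) le_rfl (by omega) (by omega) le_rfl
  obtain ⟨k, hk, hkn, hbelow, habove⟩ := exists_and_not_succ
    (P := fun k => T (n + 1) k < T (n + 1) 1) hn2 h21 (by omega)
  have hne := hT.last_ne (x := k + 1) (y := 1) (by omega) (by omega) (by omega) (by omega)
    (by omega)
  have hpath := valley_mem_wirePaths hT hk (by omega) hbelow (by omega)
    (fun x hkx hx => h.not_pattern hT hn (by omega) hkx hx) fun x hx hxk => by
      have := h'.not_pattern hT.reflect hn (k := n + 1 - k) (x := n + 2 - x) (by omega) (by omega)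
        (by omega)
      rw [reflect_last _ (by omega), reflect_last _ (by omega), reflect_last _ (by omega),
        show n + 2 - (n + 1 - k) = k + 1 by omega, show n + 2 - (n + 2 - x) = x by omega,
        show n + 2 - (n + 1 - k + 1) = k by omega] at this
      exact this
  obtain ⟨j, hjk, hkn', U, V, hU, hV, e⟩ := h.exists_entersLastFrom hT hn hpath (by simp)
  have hVeq := append_last_inj (U' := []) (V' := [1, k + 1]) hU (hjk.trans hkn')
    (fun x hx => (hV x hx).2) e.symm
  have hk1 : k < 1 := (hV 1 (by rw [hVeq.2]; simp)).1
  omega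

end IsTight
/-! ### Words and the crossings of their wires -/

section Words

variable {n a h j r s x : ℕ} {u v w : List ℕ}

theorem wordProd_nil : wordProd [] = 1 := rfl

theorem wordProd_cons (a : ℕ) (w : List ℕ) : wordProd (a :: w) = sTrans a * wordProd w := by
  simp [wordProd]

theorem wordProd_append (u v : List ℕ) : wordProd (u ++ v) = wordProd u * wordProd v := by
  simp [wordProd]

theorem sTrans_apply (a x : ℕ) :
    sTrans a x = if x = a then a + 1 else if x = a + 1 then a else x :=
  Equiv.swap_apply_def a (a + 1) x

theorem isWire_sTrans_apply (ha : 1 ≤ a ∧ a ≤ n) : IsWire n (sTrans a x) ↔ IsWire n x := by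
  rw [sTrans_apply]
  split_ifs <;> omega

theorem isWire_wordProd_apply : ∀ {w : List ℕ}, (∀ a ∈ w, 1 ≤ a ∧ a ≤ n) →
    (IsWire n (wordProd w x) ↔ IsWire n x)
  | [], _ => Iff.rfl
  | a :: w, hw => by
    rw [List.forall_mem_cons] at hw
    rw [wordProd_cons, Equiv.Perm.mul_apply, isWire_sTrans_apply hw.1, isWire_wordProd_apply hw.2]

theorem isWire_wordProd_symm_apply (hw : ∀ a ∈ w, 1 ≤ a ∧ a ≤ n) :
    IsWire n ((wordProd w).symm x) ↔ IsWire n x := by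
  rw [← isWire_wordProd_apply hw, Equiv.apply_symm_apply]

theorem letterAt_succ (hh : h < w.length) : letterAt w (h + 1) = w[h] :=
  List.getD_eq_getElem _ _ hh

theorem letterAt_mem (hj : ValidNode w j) : letterAt w j ∈ w := by
  obtain ⟨h, rfl⟩ := Nat.exists_eq_add_of_le' hj.1
  rw [letterAt_succ hj.2]
  exact List.getElem_mem _

theorem wireCol_succ (hh : h < w.length) (r : ℕ) :
    wireCol w (h + 1) r = sTrans (letterAt w (h + 1)) (wireCol w h r) := by
  have htake : stateBelow w (h + 1) = stateBelow w h * sTrans (letterAt w (h + 1)) := by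
    rw [stateBelow, List.take_succ_eq_append_getElem hh, wordProd_append, letterAt_succ hh,
      wordProd_cons, wordProd_nil, mul_one, stateBelow]
  rw [wireCol, htake]
  rfl

theorem wireCol_injective (w : List ℕ) (h : ℕ) : Function.Injective (wireCol w h) :=
  (stateBelow w h).symm.injective

theorem wireX_succ_eq_iff : wireX w (h + 1) = r ↔ wireCol w h r = letterAt w (h + 1) := by
  rw [wireCol, Equiv.symm_apply_eq]
  exact eq_comm

theorem wireY_succ_eq_iff : wireY w (h + 1) = r ↔ wireCol w h r = letterAt w (h + 1) + 1 := by
  rw [wireCol, Equiv.symm_apply_eq]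
  exact eq_comm

theorem wireX_ne_wireY (w : List ℕ) (j : ℕ) : wireX w j ≠ wireY w j :=
  (stateAbove w j).injective.ne (letterAt w j).succ_ne_self.symm

theorem isWire_wireX (hw : ∀ a ∈ w, 1 ≤ a ∧ a ≤ n) (hj : ValidNode w j) :
    IsWire n (wireX w j) := by
  have := hw _ (letterAt_mem hj)
  exact (isWire_wordProd_apply fun a ha => hw a (List.mem_of_mem_take ha)).2 (by omega)

theorem isWire_wireY (hw : ∀ a ∈ w, 1 ≤ a ∧ a ≤ n) (hj : ValidNode w j) :
    IsWire n (wireY w j) := by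
  have := hw _ (letterAt_mem hj)
  exact (isWire_wordProd_apply fun a ha => hw a (List.mem_of_mem_take ha)).2 (by omega)

/-- The node `t_j` is the crossing of the wires `ℓ_r` and `ℓ_s`. -/
def CrossAt (w : List ℕ) (j r s : ℕ) : Prop :=
  (wireX w j = r ∧ wireY w j = s) ∨ (wireX w j = s ∧ wireY w j = r)

theorem CrossAt.symm (h : CrossAt w j r s) : CrossAt w j s r := Or.symm h

theorem wireCol_succ_lt_iff (hh : h < w.length) (hrs : r ≠ s) :
    wireCol w (h + 1) r < wireCol w (h + 1) s ↔
      (wireCol w h r < wireCol w h s ↔ ¬ CrossAt w (h + 1) r s) := by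
  have := (wireCol_injective w h).ne hrs
  rw [CrossAt, wireX_succ_eq_iff, wireX_succ_eq_iff, wireY_succ_eq_iff, wireY_succ_eq_iff,
    wireCol_succ hh, wireCol_succ hh, sTrans_apply, sTrans_apply]
  split_ifs <;> omega

end Words

namespace IsReduced

variable {n h j j' r s : ℕ} {w : List ℕ}

theorem exists_crossAt (hw : IsReduced n w) (hr : IsWire n r) (hs : IsWire n s) (hrs : r ≠ s) :
    ∃ j, ValidNode w j ∧ CrossAt w j r s := by
  wlog hlt : r < s generalizing r s
  · obtain ⟨j, hj, hcross⟩ := this hs hr hrs.symm (by omega)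
    exact ⟨j, hj, hcross.symm⟩
  by_contra! hcon
  have key : ∀ h ≤ w.length, wireCol w h r < wireCol w h s := by
    intro h
    induction h with
    | zero => exact fun _ => hlt
    | succ h ih =>
      intro hh
      rw [wireCol_succ_lt_iff hh hrs]
      exact iff_of_true (ih (Nat.le_of_succ_le hh)) (hcon _ ⟨by omega, hh⟩)
  have hend : ∀ {x}, IsWire n x → wireCol w w.length x = n + 2 - x := fun {x} hx => by
    rw [wireCol, stateBelow, List.take_length, hw.2.2]
    exact longestPerm_of_isWire hx
  have := key w.length le_rfl
  rw [hend hr, hend hs] at this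
  omega

/-- There are as many nodes as pairs of wires. -/
theorem crossAt_unique (hw : IsReduced n w) (hj : ValidNode w j) (hj' : ValidNode w j')
    (h : CrossAt w j r s) (h' : CrossAt w j' r s) : j = j' := by
  let wires := Finset.Icc 1 (n + 1)
  let pairs := wires.offDiag.image (Function.uncurry Sym2.mk)
  let pairAt : ℕ → Sym2 ℕ := fun j => s(wireX w j, wireY w j)
  have maps : Set.MapsTo pairAt (Finset.Icc 1 w.length) pairs := by
    intro j hj
    have hj : ValidNode w j := Finset.mem_Icc.1 hj
    exact Finset.mem_image.2 ⟨(wireX w j, wireY w j), Finset.mem_offDiag.2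
      ⟨Finset.mem_Icc.2 (isWire_wireX hw.2.1 hj), Finset.mem_Icc.2 (isWire_wireY hw.2.1 hj),
        wireX_ne_wireY w j⟩, rfl⟩
  have surj : Set.SurjOn pairAt (Finset.Icc 1 w.length) pairs := by
    intro p hp
    obtain ⟨⟨a, b⟩, hab, rfl⟩ := Finset.mem_image.1 hp
    obtain ⟨ha, hb, hne⟩ := Finset.mem_offDiag.1 hab
    obtain ⟨j, hj, hcross⟩ := hw.exists_crossAt (Finset.mem_Icc.1 ha) (Finset.mem_Icc.1 hb) hne
    exact ⟨j, Finset.mem_coe.2 (Finset.mem_Icc.2 hj), Sym2.eq_iff.2 hcross⟩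
  have card : (Finset.Icc 1 w.length).card ≤ pairs.card := by
    rw [Sym2.card_image_offDiag, Nat.card_Icc, Nat.card_Icc, hw.1, Nat.choose_two_right,
      Nat.add_sub_cancel, Nat.add_sub_cancel, Nat.add_sub_cancel, mul_comm]
  exact Finset.injOn_of_surjOn_of_card_le pairAt maps surj card
    (Finset.mem_coe.2 (Finset.mem_Icc.2 hj)) (Finset.mem_coe.2 (Finset.mem_Icc.2 hj'))
    ((Sym2.eq_iff.2 h).trans (Sym2.eq_iff.2 h').symm)

end IsReduced

/-- The index of the node at which `ℓ_r` and `ℓ_s` cross, and `N + 1` (which stands for a lower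
endpoint) if there is no such node. -/
def crossing (w : List ℕ) (r s : ℕ) : ℕ :=
  if h : ∃ j, ValidNode w j ∧ CrossAt w j r s then h.choose else w.length + 1

namespace IsReduced

variable {n h j r s : ℕ} {w : List ℕ}

theorem crossing_spec (hw : IsReduced n w) (hr : IsWire n r) (hs : IsWire n s) (hrs : r ≠ s) :
    ValidNode w (crossing w r s) ∧ CrossAt w (crossing w r s) r s := by
  have hex := hw.exists_crossAt hr hs hrs
  rw [crossing, dif_pos hex]
  exact hex.choose_spec

theorem crossing_eq (hw : IsReduced n w) (hj : ValidNode w j) (h : CrossAt w j r s) :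
    crossing w r s = j := by
  have hex : ∃ j, ValidNode w j ∧ CrossAt w j r s := ⟨j, hj, h⟩
  rw [crossing, dif_pos hex]
  exact hw.crossAt_unique hex.choose_spec.1 hj hex.choose_spec.2 h

theorem crossing_zero (hw : IsReduced n w) (r : ℕ) : crossing w r 0 = w.length + 1 := by
  refine dif_neg ?_
  rintro ⟨j, hj, h⟩
  have hX := isWire_wireX hw.2.1 hj
  have hY := isWire_wireY hw.2.1 hj
  simp only [CrossAt] at h
  omega

theorem wireCol_lt_iff (hw : IsReduced n w) (hr : 1 ≤ r) (hrs : r < s) (hs : s ≤ n + 1)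
    (hh : h ≤ w.length) : wireCol w h r < wireCol w h s ↔ h < crossing w r s := by
  obtain ⟨hvalid, hcross⟩ := hw.crossing_spec (r := r) (s := s) (by omega) (by omega) hrs.ne
  induction h with
  | zero => exact iff_of_true hrs hvalid.1
  | succ h ih =>
    have hnode : CrossAt w (h + 1) r s ↔ crossing w r s = h + 1 :=
      ⟨hw.crossing_eq ⟨by omega, hh⟩, fun e => e ▸ hcross⟩
    rw [wireCol_succ_lt_iff hh hrs.ne, ih (Nat.le_of_succ_le hh), hnode]
    omega

/-- Just above its crossing with `ℓ_c`, the wire `ℓ_a` is in the adjacent column, so `ℓ_b` is left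
or right of both. -/
theorem crossing_between (hw : IsReduced n w) {a b c : ℕ} (ha : 1 ≤ a) (hab : a < b) (hbc : b < c)
    (hc : c ≤ n + 1) :
    (crossing w a b < crossing w a c ∧ crossing w a c < crossing w b c) ∨
      (crossing w b c < crossing w a c ∧ crossing w a c < crossing w a b) := by
  obtain ⟨hvalid, hac⟩ := hw.crossing_spec (r := a) (s := c) (by omega) (by omega) (by omega)
  have habcross := (hw.crossing_spec (r := a) (s := b) (by omega) (by omega) hab.ne).2
  have hbccross := (hw.crossing_spec (r := b) (s := c) (by omega) (by omega) hbc.ne).2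
  have hne : crossing w a b ≠ crossing w a c := fun e => by
    rw [e] at habcross
    simp only [CrossAt] at habcross hac
    omega
  have hne' : crossing w b c ≠ crossing w a c := fun e => by
    rw [e] at hbccross
    simp only [CrossAt] at hbccross hac
    omega
  obtain ⟨h, hj⟩ := Nat.exists_eq_add_of_le' hvalid.1
  have hh : h < w.length := by
    have := hvalid.2
    omega
  have habiff := hw.wireCol_lt_iff ha hab (by omega) hh.le
  have hbciff := hw.wireCol_lt_iff (by omega) hbc hc hh.le
  have hcolab := (wireCol_injective w h).ne hab.ne
  have hcolbc := (wireCol_injective w h).ne hbc.ne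
  rw [hj] at hac hne hne' ⊢
  rw [CrossAt, wireX_succ_eq_iff, wireX_succ_eq_iff, wireY_succ_eq_iff, wireY_succ_eq_iff] at hac
  omega

theorem crossingHeights (hw : IsReduced n w) : CrossingHeights n (crossing w) where
  symm {r s} hr hs := by
    rcases eq_or_ne r s with rfl | hrs
    · rfl
    · obtain ⟨hvalid, hcross⟩ := hw.crossing_spec hr hs hrs
      exact (hw.crossing_eq hvalid hcross.symm).symm
  lt_bottom hr hs hrs := by
    rw [hw.crossing_zero, Nat.lt_succ_iff]
    exact (hw.crossing_spec hr hs hrs).1.2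
  between := hw.crossing_between

end IsReduced

/-! ### Rigorous paths as wire paths -/

section Nodes

variable {n a b j k p r s : ℕ} {w : List ℕ}

theorem CrossAt.nodeOnWire (h : CrossAt w j r s) : NodeOnWire w j r :=
  h.imp And.left And.right

theorem CrossAt.otherWire_eq (h : CrossAt w j r s) : otherWire w j r = s := by
  rcases h with ⟨hX, hY⟩ | ⟨hX, hY⟩
  · rw [otherWire, if_pos hX, hY]
  · rw [otherWire, if_neg (hY ▸ wireX_ne_wireY w j), hX]

theorem NodeOnWire.crossAt (h : NodeOnWire w j r) : CrossAt w j r (otherWire w j r) := by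
  by_cases hX : wireX w j = r
  · rw [otherWire, if_pos hX]
    exact Or.inl ⟨hX, rfl⟩
  · rw [otherWire, if_neg hX]
    exact Or.inr ⟨rfl, h.resolve_left hX⟩

theorem mem_nodesOn : j ∈ nodesOn w r ↔ ValidNode w j ∧ NodeOnWire w j r := by
  simp only [nodesOn, List.mem_filter, List.mem_map, List.mem_range, decide_eq_true_eq]
  refine and_congr_left fun _ => ⟨?_, fun h => ⟨j - 1, ?_, Nat.sub_add_cancel h.1⟩⟩
  · rintro ⟨i, hi, rfl⟩
    exact ⟨Nat.succ_pos i, hi⟩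
  · exact (Nat.sub_lt h.1 one_pos).trans_le h.2

theorem nodesOn_nodup (w : List ℕ) (r : ℕ) : (nodesOn w r).Nodup :=
  (List.nodup_range.map (add_left_injective 1)).filter _

theorem mem_segList : j ∈ segList w r a b ↔ j ∈ nodesOn w r ∧ min a b < j ∧ j < max a b := by
  simp only [segList, List.mem_filter, decide_eq_true_eq]

theorem segList_nodup (w : List ℕ) (r a b : ℕ) : (segList w r a b).Nodup :=
  (nodesOn_nodup w r).filter _

theorem segList_comm (w : List ℕ) (r a b : ℕ) : segList w r a b = segList w r b a := by
  simp only [segList, min_comm, max_comm]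

theorem tailList_eq_segList (ha : a ≤ w.length + 1) :
    tailList w r a = segList w r a (w.length + 1) := by
  refine List.filter_congr fun j hj => ?_
  have := (mem_nodesOn.1 hj).1.2
  rw [min_eq_left ha, max_eq_right ha, decide_eq_decide]
  omega

theorem IsReduced.otherWire_crossing (hw : IsReduced n w) (hr : IsWire n r) (hs : IsWire n s)
    (hrs : r ≠ s) : otherWire w (crossing w r s) r = s :=
  (hw.crossing_spec hr hs hrs).2.otherWire_eq

theorem IsReduced.mem_nodesOn_iff (hw : IsReduced n w) (hr : IsWire n r) :
    j ∈ nodesOn w r ↔ ∃ s, IsWire n s ∧ r ≠ s ∧ crossing w r s = j := by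
  rw [mem_nodesOn]
  constructor
  · rintro ⟨hj, h⟩
    have hX := isWire_wireX hw.2.1 hj
    have hY := isWire_wireY hw.2.1 hj
    have hne := wireX_ne_wireY w j
    have hcross := h.crossAt
    refine ⟨otherWire w j r, ?_, ?_, hw.crossing_eq hj hcross⟩
    · rcases hcross with ⟨-, h'⟩ | ⟨h', -⟩ <;> rwa [← h']
    · simp only [CrossAt] at hcross
      omega
  · rintro ⟨s, hs, hrs, rfl⟩
    have := hw.crossing_spec hr hs hrs
    exact ⟨this.1, this.2.nodeOnWire⟩

theorem IsReduced.crossing_le (hw : IsReduced n w) (hr : IsWire n r) (hs : s ≤ n + 1)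
    (hrs : r ≠ s) : crossing w r s ≤ w.length + 1 := by
  rcases Nat.eq_zero_or_pos s with rfl | hpos
  · exact (hw.crossing_zero r).le
  · exact Nat.le_succ_of_le (hw.crossing_spec hr ⟨hpos, hs⟩ hrs).1.2

theorem IsReduced.mem_segList_iff (hw : IsReduced n w) (hr : IsWire n r)
    (h : Precedes (crossing w) k r p s) :
    j ∈ segList w r (crossing w r p) (crossing w r s) ↔ ∃ x, IsWire n x ∧ r ≠ x ∧
      Precedes (crossing w) k r p x ∧ Precedes (crossing w) k r x s ∧ crossing w r x = j := by
  rw [mem_segList, hw.mem_nodesOn_iff hr]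
  rcases le_or_gt r k with hrk | hrk
  · simp only [precedes_of_le hrk] at h ⊢
    rw [min_eq_right h.le, max_eq_left h.le]
    constructor
    · rintro ⟨⟨x, hx, hrx, rfl⟩, hlt, hgt⟩
      exact ⟨x, hx, hrx, hgt, hlt, rfl⟩
    · rintro ⟨x, hx, hrx, hgt, hlt, rfl⟩
      exact ⟨⟨x, hx, hrx, rfl⟩, hlt, hgt⟩
  · simp only [precedes_of_lt hrk] at h ⊢
    rw [min_eq_left h.le, max_eq_right h.le]
    constructor
    · rintro ⟨⟨x, hx, hrx, rfl⟩, hlt, hgt⟩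
      exact ⟨x, hx, hrx, hlt, hgt, rfl⟩
    · rintro ⟨x, hx, hrx, hlt, hgt, rfl⟩
      exact ⟨⟨x, hx, hrx, rfl⟩, hlt, hgt⟩

theorem IsReduced.legalTurn_iff (hw : IsReduced n w) (hr : IsWire n r) (hp : p ≤ n + 1)
    (hpr : p ≠ r) (hs : s ≤ n + 1) (hsr : s ≠ r) :
    LegalTurn n (crossing w) k p r s ↔ Precedes (crossing w) k r p s ∧
      ∀ j ∈ segList w r (crossing w r p) (crossing w r s), ¬ Forbidden w k j r := by
  constructor
  · refine fun h => ⟨h.precedes, fun j hj hf => ?_⟩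
    obtain ⟨x, hx, hrx, hpx, hxs, rfl⟩ := (hw.mem_segList_iff hr h.precedes).1 hj
    rw [Forbidden, hw.otherWire_crossing hr hx hrx] at hf
    exact h.not_forbidden hx hrx.symm hpx hxs hf
  · rintro ⟨h, hseg⟩
    refine ⟨hr, hp, hs, hpr, hsr, h, fun {x} hx hxr hpx hxs hf => ?_⟩
    refine hseg (crossing w r x)
      ((hw.mem_segList_iff hr h).2 ⟨x, hx, hxr.symm, hpx, hxs, rfl⟩) ?_
    rwa [Forbidden, hw.otherWire_crossing hr hx hxr.symm]

end Nodes

section Travel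

variable {n k : ℕ} {w : List ℕ}

theorem wireSeq_head? (w : List ℕ) (r : ℕ) (ms : List ℕ) : (wireSeq w r ms).head? = some r := by
  cases ms <;> rfl

theorem exists_wireSeq_eq_cons (w : List ℕ) (r : ℕ) (ms : List ℕ) :
    ∃ l, wireSeq w r ms = r :: l :=
  List.head?_eq_some_iff.1 (wireSeq_head? w r ms)

theorem TravelOK.legal (hw : IsReduced n w) : ∀ {ms : List ℕ} {r p : ℕ}, IsWire n r → p ≤ n + 1 →
    p ≠ r → (k < r → p ≠ 0) → TravelOK w k r (crossing w r p) ms →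
      (wireSeq w r ms).getLast? = some (k + 1) ∧
        TripleChain (LegalTurn n (crossing w) k) (p :: (wireSeq w r ms ++ [0]))
  | [], r, p, hr, hp, hpr, hp0, h => by
    obtain ⟨rfl, htail⟩ := h
    have hp0 := hp0 k.lt_succ_self
    rw [tailList_eq_segList (hw.crossing_le hr hp hpr.symm), ← hw.crossing_zero (k + 1)] at htail
    refine ⟨rfl, (hw.legalTurn_iff hr hp hpr n.succ.zero_le k.succ_ne_zero.symm).2 ⟨?_, htail⟩,
      trivial⟩
    exact (precedes_of_lt k.lt_succ_self).2
      (hw.crossingHeights.lt_bottom hr (by omega) hpr.symm)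
  | m :: ms, r, p, hr, hp, hpr, _, h => by
    obtain ⟨hm, hmr, hdir, hseg, hrest⟩ := h
    obtain ⟨s, hs, hrs, rfl⟩ := (hw.mem_nodesOn_iff hr).1 (mem_nodesOn.2 ⟨hm, hmr⟩)
    rw [hw.otherWire_crossing hr hs hrs, hw.crossingHeights.symm hr hs] at hrest
    have ih := hrest.legal hw hs hr.2 hrs (fun _ => by omega)
    obtain ⟨l, hl⟩ := exists_wireSeq_eq_cons w s ms
    rw [wireSeq, hw.otherWire_crossing hr hs hrs]
    rw [hl] at ih ⊢
    exact ⟨(List.getLast?_cons_cons ..).trans ih.1,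
      (hw.legalTurn_iff hr hp hpr hs.2 hrs.symm).2 ⟨hdir, hseg⟩, ih.2⟩

theorem exists_travelOK (hw : IsReduced n w) : ∀ {l : List ℕ} {r p : ℕ},
    TripleChain (LegalTurn n (crossing w) k) (p :: (r :: l ++ [0])) →
      (r :: l).getLast? = some (k + 1) →
        ∃ ms, TravelOK w k r (crossing w r p) ms ∧ wireSeq w r ms = r :: l
  | [], r, p, h, hlast => by
    obtain rfl : r = k + 1 := Option.some.inj hlast
    have hturn := h.1
    refine ⟨[], ⟨rfl, ?_⟩, rfl⟩
    rw [tailList_eq_segList (hw.crossing_le hturn.isWire hturn.source_le hturn.source_ne.symm),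
      ← hw.crossing_zero (k + 1)]
    exact ((hw.legalTurn_iff hturn.isWire hturn.source_le hturn.source_ne hturn.target_le
      hturn.target_ne).1 hturn).2
  | s :: l, r, p, h, hlast => by
    have hr := h.1.isWire
    have hrs := h.1.target_ne.symm
    obtain ⟨ms, hms, hseq⟩ := exists_travelOK hw h.2 ((List.getLast?_cons_cons ..).symm.trans hlast)
    have hs : IsWire n s := by
      cases l with
      | nil => exact h.2.1.isWire
      | cons t l => exact h.2.1.isWire
    have hother := hw.otherWire_crossing hr hs hrs
    have hnode := hw.crossing_spec hr hs hrs
    obtain ⟨hdir, hseg⟩ := (hw.legalTurn_iff hr h.1.source_le h.1.source_ne h.1.target_le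
      h.1.target_ne).1 h.1
    refine ⟨crossing w r s :: ms, ⟨hnode.1, hnode.2.nodeOnWire, hdir, hseg, ?_⟩, ?_⟩
    · rwa [hother, hw.crossingHeights.symm hr hs]
    · rw [wireSeq, hother, hseq]

theorem TravelOK.eq_of_wireSeq_eq (hw : IsReduced n w) : ∀ {ms ms' : List ℕ} {r a a' : ℕ},
    TravelOK w k r a ms → TravelOK w k r a' ms' → wireSeq w r ms = wireSeq w r ms' → ms = ms'
  | [], [], _, _, _, _, _, _ => rfl
  | [], m :: ms, r, _, _, _, _, e => by
    obtain ⟨l, hl⟩ := exists_wireSeq_eq_cons w (otherWire w m r) ms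
    simp [wireSeq, hl] at e
  | m :: ms, [], r, _, _, _, _, e => by
    obtain ⟨l, hl⟩ := exists_wireSeq_eq_cons w (otherWire w m r) ms
    simp [wireSeq, hl] at e
  | m :: ms, m' :: ms', r, _, _, h, h', e => by
    obtain ⟨hm, hmr, -, -, hrest⟩ := h
    obtain ⟨hm', hmr', -, -, hrest'⟩ := h'
    have e := (List.cons.inj e).2
    have hother : otherWire w m r = otherWire w m' r := by
      have := congrArg List.head? e
      rwa [wireSeq_head?, wireSeq_head?, Option.some_inj] at this
    obtain rfl := hw.crossAt_unique hm hm' hmr.crossAt (hother ▸ hmr'.crossAt)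
    rw [hrest.eq_of_wireSeq_eq hw hrest' e]

end Travel

section Nodup

variable {n k : ℕ} {w : List ℕ} {F : ℕ → ℕ → ℕ} {G : ℕ → ℕ}

theorem IsPotential.lt_of_mem_segList (hw : IsReduced n w) (hF : IsPotential n (crossing w) k F)
    (hG : ∀ r s, IsWire n r → IsWire n s → r ≠ s → G (crossing w r s) = F r s) {r p s j : ℕ}
    (hr : IsWire n r) (hp : p ≤ n + 1) (hs : s ≤ n + 1) (h : Precedes (crossing w) k r p s)
    (hj : j ∈ segList w r (crossing w r p) (crossing w r s)) : F r p < G j ∧ G j < F r s := by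
  obtain ⟨x, hx, hrx, hpx, hxs, rfl⟩ := (hw.mem_segList_iff hr h).1 hj
  rw [hG r x hr hx hrx]
  exact ⟨hF.strictMono hr hp hx.2 hpx, hF.strictMono hr hx.2 hs hxs⟩

/-- A path only moves to nodes of higher potential, so it never returns to a node. -/
theorem TravelOK.nodup_visitTail (hw : IsReduced n w) (hF : IsPotential n (crossing w) k F)
    (hG : ∀ r s, IsWire n r → IsWire n s → r ≠ s → G (crossing w r s) = F r s) :
    ∀ {ms : List ℕ} {r p : ℕ}, IsWire n r → p ≤ n + 1 → p ≠ r → (k < r → p ≠ 0) →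
      TravelOK w k r (crossing w r p) ms →
        (visitTail w r (crossing w r p) ms).Nodup ∧
          ∀ j ∈ visitTail w r (crossing w r p) ms, F r p < G j
  | [], r, p, hr, hp, hpr, hp0, h => by
    obtain ⟨rfl, -⟩ := h
    have hp0 := hp0 k.lt_succ_self
    rw [visitTail, tailList_eq_segList (hw.crossing_le hr hp hpr.symm),
      ← hw.crossing_zero (k + 1)]
    refine ⟨segList_nodup _ _ _ _, fun j hj =>
      (hF.lt_of_mem_segList hw hG hr hp n.succ.zero_le ?_ hj).1⟩
    exact (precedes_of_lt k.lt_succ_self).2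
      (hw.crossingHeights.lt_bottom hr (by omega) hpr.symm)
  | m :: ms, r, p, hr, hp, _, _, h => by
    obtain ⟨hm, hmr, hdir, -, hrest⟩ := h
    obtain ⟨s, hs, hrs, rfl⟩ := (hw.mem_nodesOn_iff hr).1 (mem_nodesOn.2 ⟨hm, hmr⟩)
    have hother := hw.otherWire_crossing hr hs hrs
    have hGrs := hG r s hr hs hrs
    have hps := hF.strictMono hr hp hs.2 hdir
    have seg := fun j => hF.lt_of_mem_segList hw hG (j := j) hr hp hs.2 hdir
    rw [hother, hw.crossingHeights.symm hr hs] at hrest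
    obtain ⟨hnodup, hlt⟩ := hrest.nodup_visitTail hw hF hG hs hr.2 hrs (fun _ => by omega)
    rw [hF.symm hs hr, ← hw.crossingHeights.symm hr hs] at hlt
    rw [← hw.crossingHeights.symm hr hs] at hnodup
    rw [visitTail, hother]
    refine ⟨List.nodup_append.2 ⟨segList_nodup _ _ _ _, List.nodup_cons.2 ⟨fun hmem => ?_, hnodup⟩,
      ?_⟩, ?_⟩
    · exact (hGrs ▸ hlt _ hmem).false
    · rintro i hi j hj rfl
      rcases List.mem_cons.1 hj with rfl | hj
      · exact (hGrs ▸ (seg _ hi).2).false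
      · exact ((seg _ hi).2.trans (hlt _ hj)).false
    · intro j hj
      rcases List.mem_append.1 hj with hj | hj
      · exact (seg j hj).1
      · rcases List.mem_cons.1 hj with rfl | hj
        · rwa [hGrs]
        · exact hps.trans (hlt j hj)

theorem IsReduced.exists_nodePotential (hw : IsReduced n w)
    (hF : IsPotential n (crossing w) k F) :
    ∃ G : ℕ → ℕ, ∀ r s, IsWire n r → IsWire n s → r ≠ s → G (crossing w r s) = F r s := by
  refine ⟨fun j => F (wireX w j) (wireY w j), fun r s hr hs hrs => ?_⟩
  dsimp only
  rcases (hw.crossing_spec hr hs hrs).2 with ⟨hX, hY⟩ | ⟨hX, hY⟩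
  · rw [hX, hY]
  · rw [hX, hY, hF.symm hs hr]

end Nodup

section GP

variable {n k : ℕ} {w : List ℕ}

theorem IsReduced.isGPPath_iff (hw : IsReduced n w) {ms : List ℕ} :
    IsGPPath n w k ms ↔ 1 ≤ k ∧ k ≤ n ∧ TravelOK w k k (crossing w k 0) ms := by
  refine and_congr_right fun hk => and_congr_right fun hkn => ?_
  have hk' : IsWire n k := ⟨hk, Nat.le_succ_of_le hkn⟩
  cases ms with
  | nil => exact iff_of_false And.left fun h => k.succ_ne_self h.1.symm
  | cons m ms =>
    have htail : ValidNode w m → tailList w k m = segList w k (crossing w k 0) m := fun hm => by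
      rw [tailList_eq_segList (Nat.le_succ_of_le hm.2), segList_comm, hw.crossing_zero]
    constructor
    · rintro ⟨⟨hm, hmk, hseg, hrest⟩, -⟩
      refine ⟨hm, hmk, ?_, htail hm ▸ hseg, hrest⟩
      rw [if_pos le_rfl, hw.crossing_zero]
      exact Nat.lt_succ_of_le hm.2
    · intro h
      obtain ⟨F, hF⟩ := hw.crossingHeights.exists_potential k hk'.2
      obtain ⟨G, hG⟩ := hw.exists_nodePotential hF
      refine ⟨⟨h.1, h.2.1, (htail h.1).symm ▸ h.2.2.2.1, h.2.2.2.2⟩, ?_⟩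
      rw [visitList, htail h.1]
      exact (h.nodup_visitTail hw hF hG hk' n.succ.zero_le (by omega)
        fun h => (lt_irrefl k h).elim).1

theorem IsReduced.numGP_eq (hw : IsReduced n w) :
    numGP n w = (wirePaths n (crossing w)).ncard := by
  refine Set.ncard_congr (fun p _ => (p.1, wireSeq w p.1 p.2)) ?_ ?_ ?_
  · rintro ⟨k, ms⟩ hp
    obtain ⟨hk, hkn, htravel⟩ := hw.isGPPath_iff.1 hp
    obtain ⟨hlast, hlegal⟩ := htravel.legal hw (by omega) n.succ.zero_le (by omega)
      fun h => (lt_irrefl k h).elim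
    exact ⟨hk, hkn, wireSeq_head? w k ms, hlast, hlegal⟩
  · rintro ⟨k, ms⟩ ⟨k', ms'⟩ hp hp' e
    obtain ⟨rfl, e⟩ := Prod.mk.inj e
    exact congrArg (Prod.mk k)
      ((hw.isGPPath_iff.1 hp).2.2.eq_of_wireSeq_eq hw (hw.isGPPath_iff.1 hp').2.2 e)
  · rintro ⟨k, c⟩ hp
    have hhead : c.head? = some k := hp.head?
    obtain ⟨l, rfl⟩ := List.head?_eq_some_iff.1 hhead
    obtain ⟨ms, htravel, hseq⟩ := exists_travelOK hw hp.legal hp.getLast?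
    exact ⟨(k, ms), hw.isGPPath_iff.2 ⟨hp.one_le, hp.le, htravel⟩, Prod.ext rfl hseq⟩

end GP

/-! ### Two-moves -/

section NodeWires

variable {a n n' j r s : ℕ} {u v w w' : List ℕ} {f : ℕ → ℕ}

/-- The two wires crossing at the node `t_j`, in the order of their columns above it. -/
def nodeWires (w : List ℕ) (j : ℕ) : ℕ × ℕ := (wireX w j, wireY w j)

theorem crossAt_iff : CrossAt w j r s ↔ nodeWires w j = (r, s) ∨ nodeWires w j = (s, r) := by
  simp only [CrossAt, nodeWires, Prod.mk.injEq]

theorem nodeOnWire_iff : NodeOnWire w j r ↔ (nodeWires w j).1 = r ∨ (nodeWires w j).2 = r :=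
  Iff.rfl

theorem validNode_append :
    ValidNode (u ++ v) j ↔ ValidNode u j ∨ ∃ i, ValidNode v i ∧ j = u.length + i := by
  simp only [ValidNode, List.length_append]
  constructor
  · intro h
    by_cases hj : j ≤ u.length
    · exact Or.inl ⟨h.1, hj⟩
    · exact Or.inr ⟨j - u.length, by omega⟩
  · rintro (h | ⟨i, h, rfl⟩) <;> omega

theorem nodeWires_append_left (hj : ValidNode u j) : nodeWires (u ++ v) j = nodeWires u j := by
  obtain ⟨h, rfl⟩ := Nat.exists_eq_add_of_le' hj.1
  have hh : h < u.length := hj.2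
  have hletter : letterAt (u ++ v) (h + 1) = letterAt u (h + 1) :=
    List.getD_append _ _ _ _ hh
  have hstate : stateAbove (u ++ v) (h + 1) = stateAbove u (h + 1) := by
    rw [stateAbove, Nat.add_sub_cancel, List.take_append_of_le_length hh.le]
    rfl
  simp only [nodeWires, wireX, wireY, hletter, hstate]

theorem nodeWires_append_right (u v : List ℕ) (hj : 1 ≤ j) :
    nodeWires (u ++ v) (u.length + j) = (nodeWires v j).map (wordProd u) (wordProd u) := by
  obtain ⟨h, rfl⟩ := Nat.exists_eq_add_of_le' hj
  have hletter : letterAt (u ++ v) (u.length + (h + 1)) = letterAt v (h + 1) := by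
    rw [letterAt, ← Nat.add_assoc, Nat.add_sub_cancel,
      List.getD_append_right _ _ _ _ (Nat.le_add_right _ _), Nat.add_sub_cancel_left]
    rfl
  have hstate : stateAbove (u ++ v) (u.length + (h + 1)) = wordProd u * stateAbove v (h + 1) := by
    rw [stateAbove, ← Nat.add_assoc, Nat.add_sub_cancel, List.take_length_add_append,
      wordProd_append]
    rfl
  simp only [nodeWires, wireX, wireY, hletter, hstate, Equiv.Perm.mul_apply, Prod.map_apply]

theorem nodeWires_cons_one (a : ℕ) (v : List ℕ) : nodeWires (a :: v) 1 = (a, a + 1) := rfl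

theorem nodeWires_cons_succ (a : ℕ) (v : List ℕ) (hj : 1 ≤ j) :
    nodeWires (a :: v) (j + 1) = (nodeWires v j).map (sTrans a) (sTrans a) := by
  have := nodeWires_append_right [a] v hj
  rwa [wordProd_cons, wordProd_nil, mul_one, List.singleton_append, List.length_singleton,
    Nat.add_comm] at this

/-- `f` sends every node of `w` to a node of `w'` at which the same two wires cross, and the lower
endpoints to the lower endpoints. -/
structure IsNodeMap (w w' : List ℕ) (f : ℕ → ℕ) : Prop where
  valid {j : ℕ} (hj : ValidNode w j) : ValidNode w' (f j)
  nodeWires {j : ℕ} (hj : ValidNode w j) : nodeWires w' (f j) = nodeWires w j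
  bottom : f (w.length + 1) = w'.length + 1

theorem IsNodeMap.crossing_eq (hf : IsNodeMap w w' f) (hw : IsReduced n w)
    (hw' : IsReduced n' w') (hr : IsWire n r) (hs : s ≤ n + 1) (hsr : s ≠ r) :
    crossing w' r s = f (crossing w r s) := by
  rcases Nat.eq_zero_or_pos s with rfl | hpos
  · rw [hw.crossing_zero, hw'.crossing_zero, hf.bottom]
  · obtain ⟨hvalid, hcross⟩ := hw.crossing_spec hr ⟨hpos, hs⟩ hsr.symm
    refine hw'.crossing_eq (hf.valid hvalid) ?_
    rwa [crossAt_iff, hf.nodeWires hvalid, ← crossAt_iff]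

end NodeWires

section TwoMoves

variable {a b n j r : ℕ} {u v w w' : List ℕ}

theorem sTrans_apply_of_far (h : a + 1 < b ∨ b + 1 < a) :
    sTrans a b = b ∧ sTrans a (b + 1) = b + 1 := by
  rw [sTrans_apply, sTrans_apply]
  split_ifs <;> omega

theorem sTrans_mul_comm_of_far (h : a + 1 < b ∨ b + 1 < a) :
    sTrans a * sTrans b = sTrans b * sTrans a := by
  ext x
  simp only [Equiv.Perm.mul_apply, sTrans_apply]
  split_ifs <;> omega

theorem IsReduced.twoMoveStep (hw : IsReduced n w) (h : TwoMoveStep w w') : IsReduced n w' := by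
  obtain ⟨u, v, a, b, hab, rfl, rfl⟩ := h
  obtain ⟨hlength, hletters, hprod⟩ := hw
  have hperm : (u ++ b :: a :: v).Perm (u ++ a :: b :: v) := (List.Perm.swap a b v).append_left u
  refine ⟨hperm.length_eq.trans hlength, fun c hc => hletters c (hperm.subset hc), ?_⟩
  rw [← hprod]
  simp only [wordProd_append, wordProd_cons]
  rw [← mul_assoc (sTrans b), ← mul_assoc (sTrans a), sTrans_mul_comm_of_far hab]

theorem nodeWires_swap_of_far (h : a + 1 < b ∨ b + 1 < a) (v : List ℕ) :
    ∀ {j : ℕ}, 1 ≤ j → nodeWires (b :: a :: v) (sTrans 1 j) = nodeWires (a :: b :: v) j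
  | 1, _ => by
    obtain ⟨hba, hba'⟩ := sTrans_apply_of_far h.symm
    rw [show sTrans 1 1 = 1 + 1 from Equiv.swap_apply_left _ _, nodeWires_cons_succ _ _ le_rfl,
      nodeWires_cons_one, nodeWires_cons_one, Prod.map_apply, hba, hba']
  | 2, _ => by
    obtain ⟨hab, hab'⟩ := sTrans_apply_of_far h
    rw [show sTrans 1 2 = 1 from Equiv.swap_apply_right _ _, nodeWires_cons_succ _ _ le_rfl,
      nodeWires_cons_one, nodeWires_cons_one, Prod.map_apply, hab, hab']
  | j + 3, _ => by
    have hcomm : sTrans a ∘ sTrans b = sTrans b ∘ sTrans a :=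
      congrArg DFunLike.coe (sTrans_mul_comm_of_far h)
    rw [show sTrans 1 (j + 3) = j + 3 from Equiv.swap_apply_of_ne_of_ne (by omega) (by omega)]
    simp only [nodeWires_cons_succ _ _ (Nat.le_add_left 1 _), Prod.map_map, hcomm]

theorem isNodeMap_of_far (h : a + 1 < b ∨ b + 1 < a) :
    IsNodeMap (u ++ a :: b :: v) (u ++ b :: a :: v) (sTrans (u.length + 1)) where
  valid {j} hj := by
    rw [ValidNode, List.length_append, List.length_cons, List.length_cons] at hj ⊢
    rw [sTrans_apply]
    split_ifs <;> omega
  nodeWires {j} hj := by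
    rcases validNode_append.1 hj with hj | ⟨i, hi, rfl⟩
    · have hfix : sTrans (u.length + 1) j = j :=
        Equiv.swap_apply_of_ne_of_ne (by have := hj.2; omega) (by have := hj.2; omega)
      rw [hfix, nodeWires_append_left hj, nodeWires_append_left hj]
    · have hshift : sTrans (u.length + 1) (u.length + i) = u.length + sTrans 1 i := by
        rw [sTrans_apply, sTrans_apply]
        split_ifs <;> omega
      have hpos : 1 ≤ sTrans 1 i := by
        have := hi.1
        rw [sTrans_apply]
        split_ifs <;> omega
      rw [hshift, nodeWires_append_right _ _ hpos, nodeWires_append_right _ _ hi.1,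
        nodeWires_swap_of_far h v hi.1]
  bottom := by
    rw [List.length_append, List.length_append, List.length_cons, List.length_cons]
    exact Equiv.swap_apply_of_ne_of_ne (by omega) (by omega)

/-- The two nodes exchanged by a 2-move lie on four different wires. -/
theorem not_nodeOnWire_and_succ_of_far (h : a + 1 < b ∨ b + 1 < a) :
    ¬ (NodeOnWire (u ++ a :: b :: v) (u.length + 1) r ∧
      NodeOnWire (u ++ a :: b :: v) (u.length + 2) r) := by
  obtain ⟨hab, hab'⟩ := sTrans_apply_of_far h
  rw [nodeOnWire_iff, nodeOnWire_iff, nodeWires_append_right _ _ le_rfl,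
    nodeWires_append_right _ _ le_add_self, nodeWires_cons_succ _ _ le_rfl, nodeWires_cons_one,
    nodeWires_cons_one]
  simp only [Prod.map_apply, hab, hab', ← Equiv.eq_symm_apply]
  omega

theorem IsReduced.nodeOnWire_crossing (hw : IsReduced n w) (hr : IsWire n r) {x : ℕ}
    (hx : x ≤ n + 1) (hxr : x ≠ r) (h : crossing w r x ≤ w.length) :
    NodeOnWire w (crossing w r x) r := by
  rcases Nat.eq_zero_or_pos x with rfl | hpos
  · rw [hw.crossing_zero] at h
    omega
  · exact (hw.crossing_spec hr ⟨hpos, hx⟩ hxr.symm).2.nodeOnWire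

theorem IsReduced.sameOrder_twoMoveStep (hw : IsReduced n w) (h : TwoMoveStep w w') :
    SameOrder n (crossing w) (crossing w') := by
  intro r x y hr hx hy hxr hyr
  have hw' := hw.twoMoveStep h
  obtain ⟨u, v, a, b, hab, rfl, rfl⟩ := h
  have hmap := isNodeMap_of_far (u := u) (v := v) hab
  have hseparate : ∀ {x y}, x ≤ n + 1 → y ≤ n + 1 → x ≠ r → y ≠ r →
      crossing (u ++ a :: b :: v) r x = u.length + 1 →
        crossing (u ++ a :: b :: v) r y ≠ u.length + 2 := by
    intro x y hx hy hxr hyr ex ey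
    have hlength : u.length + 2 ≤ (u ++ a :: b :: v).length := by
      rw [List.length_append, List.length_cons, List.length_cons]
      omega
    exact not_nodeOnWire_and_succ_of_far hab
      ⟨ex ▸ hw.nodeOnWire_crossing hr hx hxr (by omega),
        ey ▸ hw.nodeOnWire_crossing hr hy hyr (by omega)⟩
  have hxy := hseparate hx hy hxr hyr
  have hyx := hseparate hy hx hyr hxr
  rw [hmap.crossing_eq hw hw' hr hx hxr, hmap.crossing_eq hw hw' hr hy hyr, sTrans_apply,
    sTrans_apply]
  split_ifs <;> omega

theorem IsReduced.twoMoveEquiv (hw : IsReduced n w) (h : TwoMoveEquiv w w') :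
    IsReduced n w' ∧ SameOrder n (crossing w) (crossing w') := by
  induction h with
  | refl => exact ⟨hw, SameOrder.refl n _⟩
  | tail _ hstep ih =>
    exact ⟨ih.1.twoMoveStep hstep, ih.2.trans (ih.1.sameOrder_twoMoveStep hstep)⟩

end TwoMoves

/-! ### Reflection of words -/

section ReflectWord

variable {a n j r s : ℕ} {w w' : List ℕ}

/-- The word of the wiring diagram reflected in a vertical line. -/
def reflectWord (n : ℕ) (w : List ℕ) : List ℕ := w.map (n + 1 - ·)

theorem reflectWord_append (n : ℕ) (u v : List ℕ) :
    reflectWord n (u ++ v) = reflectWord n u ++ reflectWord n v :=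
  List.map_append

theorem length_reflectWord (n : ℕ) (w : List ℕ) : (reflectWord n w).length = w.length :=
  List.length_map _

theorem forall_mem_reflectWord (hw : ∀ a ∈ w, 1 ≤ a ∧ a ≤ n) :
    ∀ a ∈ reflectWord n w, 1 ≤ a ∧ a ≤ n := by
  rw [reflectWord, List.forall_mem_map]
  intro a ha
  have := hw a ha
  omega

theorem reflectWord_reflectWord (hw : ∀ a ∈ w, a ≤ n + 1) :
    reflectWord n (reflectWord n w) = w := by
  rw [reflectWord, reflectWord, List.map_map]
  exact (List.map_congr_left fun a ha => Nat.sub_sub_self (hw a ha)).trans (List.map_id w)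

theorem reflectWord_ascWord (n : ℕ) : reflectWord n (ascWord n) = descWord n := by
  rw [reflectWord, ascWord, descWord, ascWord]
  refine List.ext_getElem (by simp) fun i hi hi' => ?_
  simp only [List.length_map, List.length_range] at hi
  simp only [List.getElem_map, List.getElem_range, List.getElem_reverse, List.length_map,
    List.length_range]
  omega

theorem longestPerm_mul_self (n : ℕ) : longestPerm n * longestPerm n = 1 :=
  Equiv.ext (longestPerm_longestPerm n)

theorem sTrans_reflect (ha : 1 ≤ a ∧ a ≤ n) :
    sTrans (n + 1 - a) = longestPerm n * sTrans a * longestPerm n := by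
  ext x
  simp only [Equiv.Perm.mul_apply, sTrans_apply, longestPerm_apply]
  split_ifs <;> omega

theorem wordProd_reflectWord : ∀ {w : List ℕ}, (∀ a ∈ w, 1 ≤ a ∧ a ≤ n) →
    wordProd (reflectWord n w) = longestPerm n * wordProd w * longestPerm n
  | [], _ => by
    rw [wordProd_nil, mul_one, longestPerm_mul_self]
    rfl
  | a :: w, hw => by
    rw [List.forall_mem_cons] at hw
    have ih := wordProd_reflectWord hw.2
    rw [reflectWord] at ih
    rw [reflectWord, List.map_cons, wordProd_cons, wordProd_cons, ih, sTrans_reflect hw.1]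
    simp only [mul_assoc]
    rw [← mul_assoc (longestPerm n) (longestPerm n), longestPerm_mul_self, one_mul]

theorem IsReduced.reflectWord (hw : IsReduced n w) : IsReduced n (reflectWord n w) := by
  refine ⟨(length_reflectWord n w).trans hw.1, forall_mem_reflectWord hw.2.1, ?_⟩
  rw [wordProd_reflectWord hw.2.1, hw.2.2, longestPerm_mul_self, one_mul]

theorem IsReduced.of_reflectWord (hw : IsReduced n (StringPolytope.reflectWord n w)) :
    IsReduced n w := by
  have hletters : ∀ a ∈ w, a ≤ n + 1 := by
    intro a ha
    have := hw.2.1 _ (List.mem_map_of_mem ha)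
    omega
  rw [← reflectWord_reflectWord hletters]
  exact hw.reflectWord

theorem validNode_reflectWord : ValidNode (reflectWord n w) j ↔ ValidNode w j := by
  rw [ValidNode, ValidNode, length_reflectWord]

theorem nodeWires_reflectWord (hw : ∀ a ∈ w, 1 ≤ a ∧ a ≤ n) (hj : ValidNode w j) :
    nodeWires (reflectWord n w) j =
      (longestPerm n (nodeWires w j).2, longestPerm n (nodeWires w j).1) := by
  obtain ⟨h, rfl⟩ := Nat.exists_eq_add_of_le' hj.1
  have hh : h < w.length := hj.2
  have ha := hw _ (letterAt_mem hj)
  have hletter : letterAt (reflectWord n w) (h + 1) = n + 1 - letterAt w (h + 1) := by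
    rw [letterAt_succ ((length_reflectWord n w).symm ▸ hh), letterAt_succ hh]
    exact List.getElem_map _
  have hstate : stateAbove (reflectWord n w) (h + 1) =
      longestPerm n * stateAbove w (h + 1) * longestPerm n := by
    rw [stateAbove, Nat.add_sub_cancel, reflectWord, ← List.map_take]
    exact wordProd_reflectWord fun a ha => hw a (List.mem_of_mem_take ha)
  have hleft : longestPerm n (n + 1 - letterAt w (h + 1)) = letterAt w (h + 1) + 1 := by
    rw [longestPerm_of_isWire] <;> omega
  have hright : longestPerm n (n + 1 - letterAt w (h + 1) + 1) = letterAt w (h + 1) := by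
    rw [longestPerm_of_isWire] <;> omega
  simp only [nodeWires, wireX, wireY, hletter, hstate, Equiv.Perm.mul_apply, hleft, hright]

theorem crossAt_reflectWord (hw : ∀ a ∈ w, 1 ≤ a ∧ a ≤ n) (hj : ValidNode w j) :
    CrossAt (reflectWord n w) j r s ↔ CrossAt w j (longestPerm n r) (longestPerm n s) := by
  have hinv : ∀ {x y}, longestPerm n x = y ↔ x = longestPerm n y := fun {x y} =>
    Function.Involutive.eq_iff (longestPerm_longestPerm n)
  rw [crossAt_iff, crossAt_iff, nodeWires_reflectWord hw hj]
  simp only [Prod.ext_iff, hinv]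
  tauto

theorem IsReduced.crossing_reflectWord (hw : IsReduced n w) :
    crossing (StringPolytope.reflectWord n w) = reflectHeights n (crossing w) := by
  funext r s
  rw [reflectHeights]
  by_cases h : ∃ j, ValidNode w j ∧ CrossAt w j (longestPerm n r) (longestPerm n s)
  · obtain ⟨j, hj, hcross⟩ := h
    rw [hw.crossing_eq hj hcross, hw.reflectWord.crossing_eq (validNode_reflectWord.2 hj)
      ((crossAt_reflectWord hw.2.1 hj).2 hcross)]
  · rw [crossing, crossing, dif_neg h, length_reflectWord, dif_neg]
    rintro ⟨j, hj, hcross⟩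
    rw [validNode_reflectWord] at hj
    exact h ⟨j, hj, (crossAt_reflectWord hw.2.1 hj).1 hcross⟩

theorem TwoMoveStep.reflectWord (hw : ∀ a ∈ w, 1 ≤ a ∧ a ≤ n) (h : TwoMoveStep w w') :
    TwoMoveStep (reflectWord n w) (reflectWord n w') := by
  obtain ⟨u, v, a, b, hab, rfl, rfl⟩ := h
  have ha := hw a (by simp)
  have hb := hw b (by simp)
  exact ⟨StringPolytope.reflectWord n u, StringPolytope.reflectWord n v, n + 1 - a, n + 1 - b,
    by omega, List.map_append, List.map_append⟩

theorem TwoMoveEquiv.reflectWord (hw : IsReduced n w) (h : TwoMoveEquiv w w') :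
    TwoMoveEquiv (reflectWord n w) (reflectWord n w') := by
  induction h with
  | refl => exact .refl
  | tail h hstep ih => exact ih.tail (hstep.reflectWord (hw.twoMoveEquiv h).1.2.1)

theorem IsContractionA.reflectWord (hw : IsReduced n w) (hn : 1 ≤ n)
    (h : IsContractionA n w w') :
    IsContractionD n (reflectWord n w) (reflectWord (n - 1) w') := by
  obtain ⟨u, v, hequiv, rfl⟩ := h
  have hu : ∀ a ∈ u, 1 ≤ a := fun a ha =>
    ((hw.twoMoveEquiv hequiv).1.2.1 a (by simp [ha])).1
  refine ⟨StringPolytope.reflectWord n u, StringPolytope.reflectWord n v, ?_, ?_⟩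
  · rw [← reflectWord_ascWord, ← reflectWord_append, ← reflectWord_append]
    exact hequiv.reflectWord hw
  · rw [reflectWord_append]
    simp only [StringPolytope.reflectWord, List.map_map]
    refine congrArg₂ _ (List.map_congr_left fun a ha => ?_) (List.map_congr_left fun a _ => ?_)
    · have := hu a ha
      simp only [Function.comp_apply]
      omega
    · simp only [Function.comp_apply]
      omega

end ReflectWord

/-! ### The D-contraction -/

section Descending

variable {c h m n r z : ℕ} {u v w : List ℕ}

theorem descWord_succ (n : ℕ) : descWord (n + 1) = (n + 1) :: descWord n := by
  simp [descWord, ascWord, List.range_succ]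

theorem length_descWord (n : ℕ) : (descWord n).length = n := by
  simp [descWord, ascWord]

theorem length_append_descWord (n : ℕ) (u v : List ℕ) :
    (u ++ descWord n ++ v).length = u.length + n + v.length := by
  rw [List.length_append, List.length_append, length_descWord]

theorem wordProd_descWord_apply (n c : ℕ) :
    wordProd (descWord n) c = if c = 1 then n + 1 else if 2 ≤ c ∧ c ≤ n + 1 then c - 1 else c := by
  induction n with
  | zero =>
    rw [show descWord 0 = [] from rfl, wordProd_nil, Equiv.Perm.one_apply]
    split_ifs <;> omega
  | succ n ih =>
    rw [descWord_succ, wordProd_cons, Equiv.Perm.mul_apply, ih, sTrans_apply]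
    split_ifs <;> omega

theorem letterAt_append_descWord (u v : List ℕ) (hm : m < n) :
    letterAt (u ++ descWord n ++ v) (u.length + m + 1) = n - m := by
  have hlen : u.length + m < (u ++ descWord n).length := by
    rw [List.length_append, length_descWord]
    omega
  rw [letterAt_succ (hlen.trans_le (by simp)), List.getElem_append_left hlen,
    List.getElem_append_right (Nat.le_add_right _ _)]
  simp [descWord, ascWord]
  omega

theorem isWire_wireCol_iff (hw : ∀ a ∈ w, 1 ≤ a ∧ a ≤ n) :
    IsWire n (wireCol w h r) ↔ IsWire n r :=
  isWire_wordProd_symm_apply fun a ha => hw a (List.mem_of_mem_take ha)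

theorem wireCol_append_descWord
    (hz : wireCol (u ++ descWord n ++ v) u.length z = n + 1) (hm : m ≤ n) :
    wireCol (u ++ descWord n ++ v) (u.length + m) z = n + 1 - m := by
  induction m with
  | zero => exact hz
  | succ m ih =>
    have hlen : u.length + m < (u ++ descWord n ++ v).length := by
      rw [length_append_descWord]
      omega
    rw [← Nat.add_assoc, wireCol_succ hlen, letterAt_append_descWord u v hm,
      ih (Nat.le_of_succ_le hm), sTrans_apply, if_neg (by omega), if_pos (by omega)]
    omega

end Descending

namespace IsReduced

variable {c j n s : ℕ} {u v : List ℕ}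

/-- Otherwise `D_n` takes the wire above it in the last column to the first one, past `ℓ_{n+1}`,
which that wire has crossed already. -/
theorem wireCol_last (hw : IsReduced n (u ++ descWord n ++ v)) :
    wireCol (u ++ descWord n ++ v) u.length (n + 1) = n + 1 := by
  set w := u ++ descWord n ++ v
  have hlen : w.length = u.length + n + v.length := length_append_descWord n u v
  obtain ⟨z, hz⟩ : ∃ z, wireCol w u.length z = n + 1 :=
    (stateBelow w u.length).symm.surjective _
  have hzWire : IsWire n z := (isWire_wireCol_iff (h := u.length) hw.2.1).1 (by omega)
  rcases hzWire.2.eq_or_lt with rfl | hzn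
  · exact hz
  have hbottom : wireCol w (u.length + n) z = n + 1 - n := wireCol_append_descWord hz le_rfl
  have hlast {h : ℕ} : IsWire n (wireCol w h (n + 1)) :=
    (isWire_wireCol_iff hw.2.1).2 (by omega)
  have hne := (wireCol_injective w (u.length + n)).ne hzn.ne
  have htop : ¬ wireCol w u.length z < wireCol w u.length (n + 1) := by
    have := (hlast (h := u.length)).2
    omega
  rw [hw.wireCol_lt_iff hzWire.1 hzn le_rfl (by omega)] at htop
  have hcross := (hw.wireCol_lt_iff (h := u.length + n) hzWire.1 hzn le_rfl (by omega)).1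
    (by have := (hlast (h := u.length + n)).1; omega)
  omega

theorem lt_crossing_last (hw : IsReduced n (u ++ descWord n ++ v)) (hs : 1 ≤ s) (hsn : s ≤ n) :
    u.length < crossing (u ++ descWord n ++ v) s (n + 1) := by
  have hlast := hw.wireCol_last
  have hcol := (isWire_wireCol_iff (h := u.length) hw.2.1 (r := s)).2 (by omega)
  have hne := (wireCol_injective (u ++ descWord n ++ v) u.length).ne (show s ≠ n + 1 by omega)
  rw [← hw.wireCol_lt_iff hs (Nat.lt_add_one_of_le hsn) le_rfl
    (by rw [length_append_descWord]; omega)]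
  omega

theorem crossing_last_le (hw : IsReduced n (u ++ descWord n ++ v)) (hs : 1 ≤ s) (hsn : s ≤ n) :
    crossing (u ++ descWord n ++ v) s (n + 1) ≤ u.length + n := by
  have hlast := wireCol_append_descWord hw.wireCol_last le_rfl
  have hcol := (isWire_wireCol_iff (h := u.length + n) hw.2.1 (r := s)).2 (by omega)
  rw [← not_lt, ← hw.wireCol_lt_iff hs (Nat.lt_add_one_of_le hsn) le_rfl
    (by rw [length_append_descWord]; omega)]
  omega

theorem wires_le_of_outside (hw : IsReduced n (u ++ descWord n ++ v))
    (hj : ValidNode (u ++ descWord n ++ v) j) (hout : j ≤ u.length ∨ u.length + n < j) :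
    wireX (u ++ descWord n ++ v) j ≤ n ∧ wireY (u ++ descWord n ++ v) j ≤ n := by
  have hX := isWire_wireX hw.2.1 hj
  have hY := isWire_wireY hw.2.1 hj
  have hne := wireX_ne_wireY (u ++ descWord n ++ v) j
  have hnot : ∀ {s}, 1 ≤ s → s ≤ n → ¬ CrossAt (u ++ descWord n ++ v) j s (n + 1) := by
    intro s hs hsn hcross
    have hlt := hw.lt_crossing_last hs hsn
    have hle := hw.crossing_last_le hs hsn
    rw [hw.crossing_eq hj hcross] at hlt hle
    omega
  constructor
  · by_contra hcon
    exact hnot hY.1 (by omega) (Or.inr ⟨by omega, rfl⟩)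
  · by_contra hcon
    exact hnot hX.1 (by omega) (Or.inl ⟨rfl, by omega⟩)

theorem lt_of_mem_left (hw : IsReduced n (u ++ descWord n ++ v)) (hc : c ∈ u) : c < n := by
  obtain ⟨h, hh, rfl⟩ := List.getElem_of_mem hc
  have hlen : h < (u ++ descWord n ++ v).length := by
    rw [length_append_descWord]
    omega
  have hletter : letterAt (u ++ descWord n ++ v) (h + 1) = u[h] := by
    rw [letterAt_succ hlen]
    simp only [List.append_assoc, List.getElem_append_left hh]
  have hvalid : ValidNode (u ++ descWord n ++ v) (h + 1) := ⟨by omega, hlen⟩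
  have hY := isWire_wireY hw.2.1 hvalid
  have hYn := (hw.wires_le_of_outside hvalid (Or.inl hh)).2
  have hleft := (hw.wireCol_lt_iff hY.1 (Nat.lt_add_one_of_le hYn) le_rfl hlen.le).2
    ((Nat.lt_of_lt_of_le hh le_rfl).trans (hw.lt_crossing_last hY.1 hYn))
  have hlast := (isWire_wireCol_iff (h := h) hw.2.1 (r := n + 1)).2 (by omega)
  rw [wireY_succ_eq_iff.1 rfl, hletter] at hleft
  omega

theorem one_lt_of_mem_right (hw : IsReduced n (u ++ descWord n ++ v)) (hc : c ∈ v) : 1 < c := by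
  obtain ⟨h, hh, rfl⟩ := List.getElem_of_mem hc
  have hlen : u.length + n + h < (u ++ descWord n ++ v).length := by
    rw [length_append_descWord]
    omega
  have hletter : letterAt (u ++ descWord n ++ v) (u.length + n + h + 1) = v[h] := by
    rw [letterAt_succ hlen,
      List.getElem_append_right (by rw [List.length_append, length_descWord]; omega)]
    simp [length_descWord]
  have hvalid : ValidNode (u ++ descWord n ++ v) (u.length + n + h + 1) := ⟨by omega, hlen⟩
  have hX := isWire_wireX hw.2.1 hvalid
  have hXn := (hw.wires_le_of_outside hvalid (Or.inr (by omega))).1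
  have hright := (hw.wireCol_lt_iff hX.1 (Nat.lt_add_one_of_le hXn) le_rfl hlen.le).not.2
    (by have := hw.crossing_last_le hX.1 hXn; omega)
  have hne := (wireCol_injective (u ++ descWord n ++ v) (u.length + n + h)).ne
    (show wireX (u ++ descWord n ++ v) (u.length + n + h + 1) ≠ n + 1 by omega)
  have hlast := (isWire_wireCol_iff (h := u.length + n + h) hw.2.1 (r := n + 1)).2 (by omega)
  rw [wireX_succ_eq_iff.1 rfl, hletter] at hright hne
  omega

end IsReduced

section Contraction

variable {a n j r x y : ℕ} {u v w w' : List ℕ} {T T' : ℕ → ℕ → ℕ}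

theorem SameOrder.of_succ (h : SameOrder (n + 1) T T') : SameOrder n T T' :=
  fun r x y hr hx hy hxr hyr => h r x y ⟨hr.1, hr.2.trans (Nat.le_succ _)⟩
    (hx.trans (Nat.le_succ _)) (hy.trans (Nat.le_succ _)) hxr hyr

theorem sTrans_pred_apply (ha : 1 ≤ a) (x : ℕ) : sTrans (a - 1) x + 1 = sTrans a (x + 1) := by
  rw [sTrans_apply, sTrans_apply]
  split_ifs <;> omega

theorem wordProd_map_pred_apply (x : ℕ) : ∀ {v : List ℕ}, (∀ a ∈ v, 1 ≤ a) →
    wordProd (v.map (· - 1)) x + 1 = wordProd v (x + 1)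
  | [], _ => rfl
  | a :: v, hv => by
    rw [List.forall_mem_cons] at hv
    rw [List.map_cons, wordProd_cons, wordProd_cons, Equiv.Perm.mul_apply, Equiv.Perm.mul_apply,
      sTrans_pred_apply hv.1, wordProd_map_pred_apply x hv.2]

theorem nodeWires_map_pred (hv : ∀ a ∈ v, 1 ≤ a) (hj : ValidNode v j) :
    nodeWires v j = (nodeWires (v.map (· - 1)) j).map (· + 1) (· + 1) := by
  obtain ⟨h, rfl⟩ := Nat.exists_eq_add_of_le' hj.1
  have hlen : h < v.length := hj.2
  have hletter : letterAt (v.map (· - 1)) (h + 1) + 1 = letterAt v (h + 1) := by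
    rw [letterAt_succ hlen, letterAt_succ (by rwa [List.length_map]), List.getElem_map]
    exact Nat.sub_add_cancel (hv _ (List.getElem_mem hlen))
  have hstate (x : ℕ) :
      stateAbove (v.map (· - 1)) (h + 1) x + 1 = stateAbove v (h + 1) (x + 1) := by
    rw [stateAbove, stateAbove, ← List.map_take]
    exact wordProd_map_pred_apply x fun a ha => hv a (List.mem_of_mem_take ha)
  simp only [nodeWires, wireX, wireY, Prod.map_apply, hstate, hletter]

theorem wordProd_apply_of_not_isWire (hx : ¬ IsWire n x) : ∀ {w : List ℕ},
    (∀ a ∈ w, 1 ≤ a ∧ a ≤ n) → wordProd w x = x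
  | [], _ => rfl
  | a :: w, hw => by
    rw [List.forall_mem_cons] at hw
    rw [wordProd_cons, Equiv.Perm.mul_apply, wordProd_apply_of_not_isWire hx hw.2, sTrans_apply]
    split_ifs <;> omega

theorem wordProd_descWord_succ (hy : IsWire n y) : wordProd (descWord (n + 1)) (y + 1) = y := by
  rw [wordProd_descWord_apply]
  split_ifs <;> omega

namespace IsReduced

theorem forall_mem_map_pred (hw : IsReduced (n + 1) (u ++ descWord (n + 1) ++ v)) :
    ∀ a ∈ v.map (· - 1), 1 ≤ a ∧ a ≤ n := by
  rw [List.forall_mem_map]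
  intro a ha
  have hlt := hw.one_lt_of_mem_right ha
  have hle := (hw.2.1 a (List.mem_append_right _ ha)).2
  omega

theorem wordProd_contraction (hw : IsReduced (n + 1) (u ++ descWord (n + 1) ++ v)) :
    wordProd (u ++ v.map (· - 1)) = longestPerm n := by
  have hu : ∀ a ∈ u, 1 ≤ a ∧ a ≤ n := fun a ha =>
    ⟨(hw.2.1 a (by simp [ha])).1, Nat.le_of_lt_succ (hw.lt_of_mem_left ha)⟩
  have hv := hw.forall_mem_map_pred
  ext x
  by_cases hx : IsWire n x
  · have hprod := congrArg (· (x + 1)) hw.2.2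
    simp only [wordProd_append, Equiv.Perm.mul_apply] at hprod
    rw [← wordProd_map_pred_apply x fun a ha => (hw.one_lt_of_mem_right ha).le,
      wordProd_descWord_succ ((isWire_wordProd_apply hv).2 hx),
      longestPerm_of_isWire (by omega)] at hprod
    rw [wordProd_append, Equiv.Perm.mul_apply, hprod, longestPerm_of_isWire hx]
    omega
  · rw [wordProd_apply_of_not_isWire hx (List.forall_mem_append.2 ⟨hu, hv⟩), longestPerm_apply,
      if_neg hx]

theorem contraction (hw : IsReduced (n + 1) (u ++ descWord (n + 1) ++ v)) :
    IsReduced n (u ++ v.map (· - 1)) := by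
  refine ⟨?_, List.forall_mem_append.2 ⟨fun a ha => ?_, hw.forall_mem_map_pred⟩,
    hw.wordProd_contraction⟩
  · have hlength := (length_append_descWord (n + 1) u v).symm.trans hw.1
    have htriangle := Nat.triangle_succ (n + 1)
    rw [Nat.add_sub_cancel, Nat.add_sub_cancel, Nat.mul_comm, Nat.mul_comm (n + 1) n]
      at htriangle
    rw [List.length_append, List.length_map]
    omega
  · exact ⟨(hw.2.1 a (by simp [ha])).1, Nat.le_of_lt_succ (hw.lt_of_mem_left ha)⟩

theorem isNodeMap_contraction (hw : IsReduced (n + 1) (u ++ descWord (n + 1) ++ v)) :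
    IsNodeMap (u ++ v.map (· - 1)) (u ++ descWord (n + 1) ++ v)
      (fun j => if j ≤ u.length then j else j + (n + 1)) where
  valid {j} hj := by
    rw [ValidNode, List.length_append, List.length_map] at hj
    rw [ValidNode, length_append_descWord]
    split_ifs <;> omega
  nodeWires {j} hj := by
    rcases validNode_append.1 hj with hj | ⟨i, hi, rfl⟩
    · rw [if_pos hj.2, List.append_assoc, nodeWires_append_left hj, nodeWires_append_left hj]
    · have hX := isWire_wireX hw.forall_mem_map_pred hi
      have hY := isWire_wireY hw.forall_mem_map_pred hi
      have hi' : ValidNode v i := by rwa [ValidNode, List.length_map] at hi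
      have hshift : u.length + i + (n + 1) = (u ++ descWord (n + 1)).length + i := by
        rw [List.length_append, length_descWord]
        omega
      rw [if_neg (by have := hi.1; omega), hshift, nodeWires_append_right _ _ hi.1,
        nodeWires_append_right _ _ hi.1, wordProd_append,
        nodeWires_map_pred (fun a ha => (hw.one_lt_of_mem_right ha).le) hi']
      simp only [nodeWires, Prod.map_apply, Equiv.Perm.mul_apply, wordProd_descWord_succ hX,
        wordProd_descWord_succ hY]
  bottom := by
    rw [length_append_descWord, List.length_append, List.length_map, if_neg (by omega)]
    omega

theorem sameOrder_contraction (hw : IsReduced (n + 1) (u ++ descWord (n + 1) ++ v)) :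
    SameOrder n (crossing (u ++ v.map (· - 1))) (crossing (u ++ descWord (n + 1) ++ v)) := by
  intro r x y hr hx hy hxr hyr
  rw [hw.isNodeMap_contraction.crossing_eq hw.contraction hw hr hx hxr,
    hw.isNodeMap_contraction.crossing_eq hw.contraction hw hr hy hyr]
  split_ifs <;> omega

end IsReduced

theorem IsContractionD.isReduced_and_numGP_eq (h : IsContractionD n w w') (hn : 1 ≤ n)
    (hw : IsReduced n w) :
    IsReduced (n - 1) w' ∧ numGP (n - 1) w' = (wirePaths (n - 1) (crossing w)).ncard := by
  obtain ⟨m, rfl⟩ := Nat.exists_eq_add_of_le' hn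
  obtain ⟨u, v, hequiv, rfl⟩ := h
  obtain ⟨hw', hsame⟩ := hw.twoMoveEquiv hequiv
  refine ⟨hw'.contraction, ?_⟩
  rw [Nat.add_sub_cancel, hw'.contraction.numGP_eq, hw'.sameOrder_contraction.wirePaths_eq,
    hsame.of_succ.wirePaths_eq]

theorem IsReduced.numGP_reflectWord (hw : IsReduced n w) :
    numGP n (StringPolytope.reflectWord n w) = numGP n w := by
  rw [hw.numGP_eq, hw.reflectWord.numGP_eq, hw.crossing_reflectWord,
    ncard_wirePaths_reflectHeights]

theorem IsContractionA.numGP_eq (h : IsContractionA n w w') (hn : 1 ≤ n) (hw : IsReduced n w) :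
    numGP (n - 1) w' = (wirePaths (n - 1) (reflectHeights n (crossing w))).ncard := by
  obtain ⟨hred, hnum⟩ := (h.reflectWord hw hn).isReduced_and_numGP_eq hn hw.reflectWord
  rw [← hw.crossing_reflectWord, ← hnum]
  exact hred.of_reflectWord.numGP_reflectWord.symm

end Contraction

/-! ### The indices -/

section Index

variable {n : ℕ} {u v w : List ℕ} {T T' : ℕ → ℕ → ℕ}

theorem SameOrder.hasDescent (h : SameOrder n T T') (hT : HasDescent n T) : HasDescent n T' := by
  obtain ⟨m, hm, hmn, hlt⟩ := hT
  exact ⟨m, hm, hmn, (h (n + 1) (m + 1) m ⟨by omega, le_rfl⟩ (by omega) (by omega) (by omega)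
    (by omega)).1 hlt⟩

/-- The last crossing, of `ℓ_a` and `ℓ_b` with `a < b`, lies below `D_n`, hence below
`ℓ_{n+1}`; so `ℓ_{n+1}` meets `ℓ_b` before `ℓ_a`. -/
theorem IsReduced.hasDescent_crossing (hw : IsReduced n (u ++ descWord n ++ v)) (hv : v ≠ []) :
    HasDescent n (crossing (u ++ descWord n ++ v)) := by
  set w := u ++ descWord n ++ v
  have hlen : w.length = u.length + n + v.length := length_append_descWord n u v
  have hpos : 0 < v.length := List.length_pos_of_ne_nil hv
  have hvalid : ValidNode w w.length := ⟨by omega, le_rfl⟩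
  obtain ⟨a, b, ha, hab, hbn, hcross⟩ :
      ∃ a b, 1 ≤ a ∧ a < b ∧ b ≤ n ∧ CrossAt w w.length a b := by
    have hle := hw.wires_le_of_outside hvalid (Or.inr (by omega))
    have hX := isWire_wireX hw.2.1 hvalid
    have hY := isWire_wireY hw.2.1 hvalid
    rcases (wireX_ne_wireY w w.length).lt_or_gt with hlt | hlt
    · exact ⟨_, _, hX.1, hlt, hle.2, Or.inl ⟨rfl, rfl⟩⟩
    · exact ⟨_, _, hY.1, hlt, hle.1, Or.inr ⟨rfl, rfl⟩⟩
  have hba : crossing w (n + 1) b < crossing w (n + 1) a := by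
    have hT := hw.crossingHeights
    have hlast : crossing w b (n + 1) ≤ u.length + n := hw.crossing_last_le (by omega) hbn
    have hab' := hw.crossing_eq hvalid hcross
    rw [hT.symm (by omega) (show IsWire n b by omega),
      hT.symm (by omega) (show IsWire n a by omega)]
    have := hw.crossing_between ha hab (Nat.lt_add_one_of_le hbn) le_rfl
    omega
  obtain ⟨m, ham, hmb, hm, hm'⟩ := exists_and_not_succ
    (P := fun m => crossing w (n + 1) a ≤ crossing w (n + 1) m) hab.le le_rfl hba.not_ge
  exact ⟨m, ha.trans ham, by omega, (not_le.1 hm').trans_le hm⟩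

theorem IsReduced.hasDescent_of_indD_pos (hw : IsReduced n w) (h : 0 < indD n w) :
    HasDescent n (crossing w) := by
  obtain ⟨u, v, hv, hequiv⟩ := Nat.sInf_mem (Nat.nonempty_of_pos_sInf h)
  obtain ⟨hw', hsame⟩ := hw.twoMoveEquiv hequiv
  refine hsame.symm.hasDescent (hw'.hasDescent_crossing (List.ne_nil_of_length_pos ?_))
  exact hv ▸ h

theorem IsReduced.hasDescent_reflectHeights_of_indA_pos (hw : IsReduced n w) (h : 0 < indA n w) :
    HasDescent n (reflectHeights n (crossing w)) := by
  obtain ⟨u, v, hv, hequiv⟩ := Nat.sInf_mem (Nat.nonempty_of_pos_sInf h)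
  have hequiv' := TwoMoveEquiv.reflectWord hw hequiv
  rw [reflectWord_append, reflectWord_append, reflectWord_ascWord] at hequiv'
  obtain ⟨hw', hsame⟩ := hw.reflectWord.twoMoveEquiv hequiv'
  rw [hw.crossing_reflectWord] at hsame
  refine hsame.symm.hasDescent (hw'.hasDescent_crossing (List.ne_nil_of_length_pos ?_))
  rw [length_reflectWord]
  exact hv ▸ h

end Index

/-- Proposition on growth of the number of rigorous paths.
For every `i ∈ Σ_{n+1}` and `• ∈ {A, D}` one has `|GP(i)| ≥ |GP(C_•(i))| + n`;
moreover if `ind_A(i) · ind_D(i) > 0` the inequality is strict for some `•`. -/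
theorem statement13 (n : ℕ) (hn : 1 ≤ n) (i : List ℕ) (hi : IsReduced n i) :
    (∀ i', IsContractionD n i i' → numGP (n - 1) i' + n ≤ numGP n i) ∧
    (∀ i', IsContractionA n i i' → numGP (n - 1) i' + n ≤ numGP n i) ∧
    (0 < indA n i * indD n i →
      (∀ i', IsContractionD n i i' → numGP (n - 1) i' + n < numGP n i) ∨
      (∀ i', IsContractionA n i i' → numGP (n - 1) i' + n < numGP n i)) := by
  have hT := hi.crossingHeights
  have hD := hi.numGP_eq
  have hA : numGP n i = (wirePaths n (reflectHeights n (crossing i))).ncard := by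
    rw [ncard_wirePaths_reflectHeights, hD]
  refine ⟨fun i' h => ?_, fun i' h => ?_, fun hind => ?_⟩
  · rw [(h.isReduced_and_numGP_eq hn hi).2, hD]
    exact ncard_wirePaths_pred_add_le hT hn
  · rw [h.numGP_eq hn hi, hA]
    exact ncard_wirePaths_pred_add_le hT.reflect hn
  · have hdescD := hi.hasDescent_of_indD_pos (Nat.pos_of_mul_pos_left hind)
    have hdescA := hi.hasDescent_reflectHeights_of_indA_pos (Nat.pos_of_mul_pos_right hind)
    by_cases htight : IsTight n (crossing i)
    · refine Or.inr fun i' h => ?_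
      rw [h.numGP_eq hn hi, hA]
      exact not_le.1 (htight.not_reflect hT hn hdescD hdescA)
    · refine Or.inl fun i' h => ?_
      rw [(h.isReduced_and_numGP_eq hn hi).2, hD]
      exact not_le.1 htight

end StringPolytope
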